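/- arXiv:1908.11400 — 3 statements merged into one kernel-verified Lean document; each statement's English description precedes it below -/
import Mathlib

section
/- Suppose T is NIP. If I and J are infinite mutually indiscernible sequences, then their global limit types lim(I) and lim(J) commute: lim(I) ⊗ lim(J) = lim(J) ⊗ lim(I). -/
/-!
Fix finitely many parameters `d` and let `A` contain both sequences. Membership of `φ(x, y, d)` in
`lim b ⊗ lim c` says that `φ(a, a', d)` holds for all `a ⊨ lim b | A d` and `a' ⊨ lim c | A d a`
(`mem_nProd_two`). Hence it suffices that the pairs described here are the pairs with
`a' ⊨ lim c | A d` and `a ⊨ lim b | A d a'` (`realizes_swap`). This argument takes place inside `M`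
and needs no saturation.

Suppose `a ⊭ lim b | A d a'`, witnessed by `Θ(x, a')` with further parameters in `A d`: it holds
for `b i` with `i` large, but not for `a`. Limit types are complete by NIP (`lim_dichotomy`), so
transferring along `a'` and then along `a` gives

* for all large `j`, for all large `i` (depending on `j`), `¬ Θ(b i, c j)`;
* for all large `i`, for all large `j` (depending on `i`), `Θ(b i, c j)`.

If one of the index orders has a greatest element this is already absurd. Otherwise one chooses
strictly increasing `i 0 < i 1 < ⋯` and `j 0 < j 1 < ⋯` such that the truth value of
`Θ(b (i n), c (j n))` alternates. By mutual indiscernibility the sequence of pairs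
`(b (i n), c (j n))` is indiscernible (`indisc_pairs`), contradicting NIP (`no_alternation`).
-/

open FirstOrder Language Set

namespace DR

/-- A partial type over `M` in variables indexed by `β`: a set of formulas, each with
finitely many parameters from `M`. -/
abbrev PType (L : FirstOrder.Language) (M : Type) (β : Type) : Type _ :=
  Set ((k : ℕ) × (L.Formula (β ⊕ Fin k) × (Fin k → M)))

variable {M : Type}

/-- Two `β`-tuples have the same type over the parameter set `A`. -/
def EqTp (L : FirstOrder.Language) [L.Structure M] (A : Set M) {β : Type} (f g : β → M) : Prop :=
  ∀ (k : ℕ) (a : Fin k → M), (∀ i, a i ∈ A) →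
    ∀ φ : L.Formula (β ⊕ Fin k), φ.Realize (Sum.elim f a) ↔ φ.Realize (Sum.elim g a)

/-- All parameters of formulas in `p` lie in `D`. -/
def paramsIn {L : FirstOrder.Language} {β : Type} (D : Set M) (p : PType L M β) : Prop :=
  ∀ x ∈ p, ∀ i, x.2.2 i ∈ D

/-- The set of parameters appearing in `p`. -/
def paramSet {L : FirstOrder.Language} {β : Type} (p : PType L M β) : Set M :=
  ⋃ x ∈ p, Set.range x.2.2

/-- The tuple `f` realizes every formula of `p`. -/
def realizes {L : FirstOrder.Language} [L.Structure M] {β : Type} (f : β → M)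
    (p : PType L M β) : Prop :=
  ∀ x ∈ p, x.2.1.Realize (Sum.elim f x.2.2)

/-- `p` is finitely satisfiable by tuples with coordinates in `A`. -/
def finSatIn (L : FirstOrder.Language) [L.Structure M] (A : Set M) {β : Type}
    (p : PType L M β) : Prop :=
  ∀ s : Finset ((k : ℕ) × (L.Formula (β ⊕ Fin k) × (Fin k → M))), ↑s ⊆ p →
    ∃ f : β → M, (∀ i, f i ∈ A) ∧ ∀ x ∈ s, x.2.1.Realize (Sum.elim f x.2.2)

/-- `p` is a complete (consistent) type over the parameter set `D`. -/
def isCompleteOver (L : FirstOrder.Language) [L.Structure M] (D : Set M) {β : Type}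
    (p : PType L M β) : Prop :=
  paramsIn D p ∧ finSatIn L Set.univ p ∧
    ∀ (k : ℕ) (φ : L.Formula (β ⊕ Fin k)) (d : Fin k → M), (∀ i, d i ∈ D) →
      (⟨k, φ, d⟩ ∈ p ∨ ⟨k, φ.not, d⟩ ∈ p)

/-- `p` (a type with parameters in `D`) is invariant over `A`: membership of a formula depends
only on the type over `A` of its parameter tuple. -/
def invariantOver (L : FirstOrder.Language) [L.Structure M] (A D : Set M) {β : Type}
    (p : PType L M β) : Prop :=
  ∀ (k : ℕ) (φ : L.Formula (β ⊕ Fin k)) (d d' : Fin k → M), (∀ i, d' i ∈ D) →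
    EqTp L A d d' → ⟨k, φ, d⟩ ∈ p → ⟨k, φ, d'⟩ ∈ p

/-- The restriction of `p` to formulas with parameters in `S`. -/
def restrictParams {L : FirstOrder.Language} {β : Type} (S : Set M) (p : PType L M β) :
    PType L M β :=
  {x ∈ p | ∀ i, x.2.2 i ∈ S}

/-- `S` is `κ⁺`-saturated (realizes consistent types over parameter sets of size `≤ κ`). -/
def satIn (L : FirstOrder.Language) [L.Structure M] (S : Set M) (κ : Cardinal) : Prop :=
  ∀ (n : ℕ) (p : PType L M (Fin n)), paramsIn S p → Cardinal.mk ↥(paramSet p) ≤ κ →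
    finSatIn L Set.univ p → ∃ f : Fin n → M, (∀ i, f i ∈ S) ∧ realizes f p

/-- Saturation of the whole structure below the cardinal `κ` (in all small variable contexts). -/
def SatAll (L : FirstOrder.Language) (M : Type) [L.Structure M] (κ : Cardinal) : Prop :=
  ∀ (β : Type) (p : PType L M β), Cardinal.mk β < κ → Cardinal.mk ↥(paramSet p) < κ →
    finSatIn L Set.univ p → ∃ f : β → M, realizes f p

/-- `M` is a monster model: saturated in its own cardinality. -/
def IsMonster (L : FirstOrder.Language) (M : Type) [L.Structure M] : Prop :=
  SatAll L M (Cardinal.mk M)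

/-- The restriction of an `n`-type in tuple-variables to the sub-tuple of variables
selected by `σ`. -/
def restrictVars {L : FirstOrder.Language} {α : Type} {m n : ℕ} (σ : Fin m → Fin n)
    (p : PType L M (Fin n × α)) : PType L M (Fin m × α) :=
  {x | ⟨x.1, x.2.1.relabel (Sum.map (Prod.map σ id) id), x.2.2⟩ ∈ p}

/-- An `n`-type over `D` is `m`-determined if it is completely determined by the `m`-types
it contains among its variables. -/
def mDetermined (L : FirstOrder.Language) [L.Structure M] {α : Type} {n : ℕ} (m : ℕ)
    (D : Set M) (p : PType L M (Fin n × α)) : Prop :=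
  ∀ q : PType L M (Fin n × α), isCompleteOver L D q →
    (∀ σ : Fin m → Fin n, StrictMono σ → restrictVars σ q = restrictVars σ p) → q = p

/-- Flatten a finite tuple of `α`-tuples into a single tuple. -/
def tupcat {α : Type} {N : ℕ} (c : Fin N → α → M) : Fin N × α → M := fun x => c x.1 x.2

/-- The sequence `b` of `α`-tuples is indiscernible over `A`. -/
def indiscOver (L : FirstOrder.Language) [L.Structure M] (A : Set M) {ι α : Type}
    [LinearOrder ι] (b : ι → α → M) : Prop :=
  ∀ (N : ℕ) (f g : Fin N → ι), StrictMono f → StrictMono g →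
    EqTp L A (tupcat fun j => b (f j)) (tupcat fun j => b (g j))

/-- `T = Th(M)` is NIP: every formula has finite alternation rank on every
indiscernible sequence. -/
def IsNIP (L : FirstOrder.Language) (M : Type) [L.Structure M] : Prop :=
  ∀ (β ι : Type) [LinearOrder ι] (b : ι → β → M), indiscOver L ∅ b →
    ∀ (k : ℕ) (φ : L.Formula (β ⊕ Fin k)) (d : Fin k → M),
      ∃ N : ℕ, ∀ f : Fin (N + 1) → ι, StrictMono f →
        ∃ j : Fin N,
          (φ.Realize (Sum.elim (b (f j.castSucc)) d) ↔ φ.Realize (Sum.elim (b (f j.succ)) d))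

/-- The (global) limit type of a sequence: formulas eventually satisfied along the sequence. -/
def limTp (L : FirstOrder.Language) [L.Structure M] {ι : Type} [LinearOrder ι] (b : ι → M) :
    PType L M (Fin 1) :=
  {x | ∃ i₀ : ι, ∀ i ≥ i₀, x.2.1.Realize (Sum.elim (fun _ : Fin 1 => b i) x.2.2)}

/-- The product `p₀ ⊗ ⋯ ⊗ p_{n-1}` (resolved left to right) of global types invariant
over `A`, in singleton variables. -/
def nProd (L : FirstOrder.Language) [L.Structure M] (A : Set M) :
    (n : ℕ) → (Fin n → PType L M (Fin 1)) → PType L M (Fin n)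
  | 0, _ => {x | x.2.1.Realize (Sum.elim (fun v : Fin 0 => v.elim0) x.2.2)}
  | n + 1, ps =>
    {x | ∀ a : M,
      realizes (fun _ : Fin 1 => a) (restrictParams (A ∪ Set.range x.2.2) (ps 0)) →
      ⟨x.1 + 1,
        x.2.1.relabel (Sum.elim
          (fun v : Fin (n + 1) =>
            (Fin.cases (Sum.inr (Fin.last x.1)) (fun i => Sum.inl i) v : Fin n ⊕ Fin (x.1 + 1)))
          (fun j : Fin x.1 => Sum.inr j.castSucc)),
        Fin.snoc x.2.2 a⟩ ∈ nProd L A n (fun i => ps i.succ)}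

/-- `c` is (the left part of) a Dedekind cut: a nonempty proper lower set with no maximum,
whose complement has no minimum. -/
def IsDedekindCut {ι : Type} [LinearOrder ι] (c : Set ι) : Prop :=
  c.Nonempty ∧ cᶜ.Nonempty ∧ (∀ i ∈ c, ∀ j, j ≤ i → j ∈ c) ∧
    (∀ i ∈ c, ∃ j ∈ c, i < j) ∧ (∀ i ∈ cᶜ, ∃ j ∈ cᶜ, j < i)

/-- The strict order on the index extended by points inserted at the cuts `Lc`. -/
def insLT {ι η : Type} [LinearOrder ι] [LinearOrder η] (Lc : η → Set ι) :
    (ι ⊕ η) → (ι ⊕ η) → Prop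
  | Sum.inl i, Sum.inl j => i < j
  | Sum.inl i, Sum.inr e => i ∈ Lc e
  | Sum.inr e, Sum.inl i => i ∉ Lc e
  | Sum.inr e, Sum.inr e' => Lc e ⊂ Lc e' ∨ (Lc e = Lc e' ∧ e < e')

/-- The sequence `b` remains indiscernible over `A` after inserting the tuples `a e` for
`e ∈ S`, each at the cut `Lc e`. -/
def InsertsInd (L : FirstOrder.Language) [L.Structure M] (A : Set M) {ι η α : Type}
    [LinearOrder ι] [LinearOrder η] (b : ι → α → M) (Lc : η → Set ι) (a : η → α → M)
    (S : Set η) : Prop :=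
  ∀ (N : ℕ) (f g : Fin N → ι ⊕ η),
    (∀ x y : Fin N, x < y → insLT Lc (f x) (f y)) →
    (∀ x y : Fin N, x < y → insLT Lc (g x) (g y)) →
    (∀ x e, f x = Sum.inr e → e ∈ S) → (∀ x e, g x = Sum.inr e → e ∈ S) →
    EqTp L A (tupcat fun j => Sum.elim b a (f j)) (tupcat fun j => Sum.elim b a (g j))

/-- The left part of the `t`-th cut of the partition `part`. -/
def cutSet {ι : Type} [LinearOrder ι] {n : ℕ} (part : ι → Fin (n + 1)) (t : Fin n) : Set ι :=
  {i | part i ≤ t.castSucc}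

/-- `part` is a Dedekind partition: a monotone surjection onto `Fin (n+1)` all of whose
`n` cuts are Dedekind. -/
def IsDedekindPartition {ι : Type} [LinearOrder ι] {n : ℕ} (part : ι → Fin (n + 1)) : Prop :=
  Monotone part ∧ (∀ t, ∃ i, part i = t) ∧ ∀ t : Fin n, IsDedekindCut (cutSet part t)

/-- The Dedekind partition `part` of the sequence `b` (indiscernible over `A`) is `m`-distal:
if every `m`-element subset of `(a 0, …, a (n-1))` inserts indiscernibly over `A` at the cuts,
then the whole tuple inserts. -/
def MDistalPartition (L : FirstOrder.Language) [L.Structure M] (A : Set M) {ι α : Type}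
    [LinearOrder ι] {n : ℕ} (b : ι → α → M) (part : ι → Fin (n + 1)) (m : ℕ) : Prop :=
  ∀ a : Fin n → α → M,
    (∀ S : Set (Fin n), S.ncard = m → InsertsInd L A b (cutSet part) a S) →
    InsertsInd L A b (cutSet part) a Set.univ

/-- The limit type `lim(c₀, …, c_{n-1})` of the cuts of the partition `part`, as a type
in `n` tuple-variables: formulas satisfied by all tuples close enough to the cuts. -/
def limCutTp (L : FirstOrder.Language) [L.Structure M] {ι α : Type} [LinearOrder ι] {n : ℕ}
    (b : ι → α → M) (part : ι → Fin (n + 1)) : PType L M (Fin n × α) :=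
  {x | ∃ lo hi : Fin n → ι,
    (∀ t, lo t ∈ cutSet part t) ∧ (∀ t, hi t ∉ cutSet part t) ∧
    ∀ it : Fin n → ι, (∀ t, lo t < it t ∧ it t < hi t) →
      x.2.1.Realize (Sum.elim (fun v => b (it v.1) v.2) x.2.2)}

/-- Two sequences have the same EM-type (over `∅`). -/
def SameEM (L : FirstOrder.Language) [L.Structure M] {ι κι α : Type} [LinearOrder ι]
    [LinearOrder κι] (b : ι → α → M) (c : κι → α → M) : Prop :=
  ∀ (N : ℕ) (f : Fin N → ι) (g : Fin N → κι), StrictMono f → StrictMono g →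
    EqTp L ∅ (tupcat fun j => b (f j)) (tupcat fun j => c (g j))

/-- The complete EM-type of the indiscernible sequence `b` is `(n, m)`-distal: every Dedekind
partition with `n` cuts of every sequence with the same EM-type is `m`-distal. -/
def EMdistalNM (L : FirstOrder.Language) [L.Structure M] {ι α : Type} [LinearOrder ι]
    (b : ι → α → M) (n m : ℕ) : Prop :=
  ∀ (κι : Type) [LinearOrder κι] (c : κι → α → M), SameEM L b c →
    ∀ part : κι → Fin (n + 1), IsDedekindPartition part → MDistalPartition L ∅ c part m

/-- The index of an `(m+1)`-skeleton: `ω + (ω* + ω) + ⋯ + (ω* + ω) + ω*` with `m` middle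
pieces of type `ω* + ω ≅ ℤ`. -/
abbrev SkelIdx (m : ℕ) : Type := (ℕ ⊕ₗ Lex (Fin m × ℤ)) ⊕ₗ ℕᵒᵈ

/-- The canonical partition of the skeleton index into its `m + 2` pieces. -/
def skelPart (m : ℕ) : SkelIdx m → Fin (m + 2) := fun x =>
  match ofLex x with
  | Sum.inl y =>
    match ofLex y with
    | Sum.inl _ => 0
    | Sum.inr tz => ((ofLex tz).1.succ).castSucc
  | Sum.inr _ => Fin.last (m + 1)

/-- The theory of `M`, with parameters for `A` named, is `m`-distal: every Dedekind
partition with `m + 1` cuts of every sequence indiscernible over `A` is `m`-distal over `A`. -/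
def TheoryMDistalOver (L : FirstOrder.Language) (M : Type) [L.Structure M] (A : Set M)
    (m : ℕ) : Prop :=
  ∀ (ι α : Type) [LinearOrder ι] (b : ι → α → M), indiscOver L A b →
    ∀ part : ι → Fin (m + 2), IsDedekindPartition part → MDistalPartition L A b part m

/-- `T = Th(M)` is stable: every indiscernible sequence is totally indiscernible. -/
def TotallyIndisc (L : FirstOrder.Language) (M : Type) [L.Structure M] : Prop :=
  ∀ (ι α : Type) [LinearOrder ι] (b : ι → α → M), indiscOver L ∅ b →
    ∀ (N : ℕ) (f g : Fin N → ι), Function.Injective f → Function.Injective g →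
      EqTp L ∅ (tupcat fun j => b (f j)) (tupcat fun j => b (g j))

/-- `T = Th(M)` is strongly `1`-distal. -/
def StronglyOneDistal (L : FirstOrder.Language) (M : Type) [L.Structure M] : Prop :=
  ∀ (ι α : Type) [LinearOrder ι] (b : ι → α → M) (c : Set ι), IsDedekindCut c →
    ∀ (D : Set M) (a : α → M), indiscOver L D b →
      InsertsInd L ∅ b (fun _ : PUnit => c) (fun _ => a) Set.univ →
      InsertsInd L D b (fun _ : PUnit => c) (fun _ => a) Set.univ

/-- The language with a single `n`-ary relation symbol. -/
def hyperLang (n : ℕ) : FirstOrder.Language where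
  Functions := fun _ => Empty
  Relations := fun k => PLift (k = n)

/-- The edge relation of a `hyperLang n`-structure. -/
def Edge {n : ℕ} {M : Type} [S : (hyperLang n).Structure M] (v : Fin n → M) : Prop :=
  Structure.RelMap (L := hyperLang n) (⟨rfl⟩ : (hyperLang n).Relations n) v

/-- `M` is a generic `(n+2)`-uniform hypergraph: an infinite `(n+2)`-uniform hypergraph
satisfying all extension axioms `φ_{s,t}`. -/
def IsGenericHypergraph (n : ℕ) (M : Type) [S : (hyperLang (n + 2)).Structure M] : Prop :=
  Infinite M ∧
  (∀ (v : Fin (n + 2) → M) (σ : Equiv.Perm (Fin (n + 2))), Edge v → Edge (v ∘ σ)) ∧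
  (∀ v : Fin (n + 2) → M, Edge v → Function.Injective v) ∧
  ∀ (s t : ℕ) (A : Fin s → Fin (n + 1) → M) (B : Fin t → Fin (n + 1) → M),
    (∀ i, Function.Injective (A i)) → (∀ j, Function.Injective (B j)) →
    (∀ i j, i ≠ j → Set.range (A i) ≠ Set.range (A j)) →
    (∀ i j, i ≠ j → Set.range (B i) ≠ Set.range (B j)) →
    (∀ i j, Set.range (A i) ≠ Set.range (B j)) →
    ∃ x : M, (∀ i, Edge (Fin.snoc (A i) x)) ∧ ∀ j, ¬ Edge (Fin.snoc (B j) x)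

variable {M : Type}

/-- The unique `A`-invariant global extension of a type `q` over the saturated model `S`. -/
def globExtT (L : FirstOrder.Language) [L.Structure M] (A S : Set M) {β : Type}
    (q : PType L M β) : PType L M β :=
  {x | ∀ d' : Fin x.1 → M, (∀ i, d' i ∈ S) → EqTp L A x.2.2 d' → ⟨x.1, x.2.1, d'⟩ ∈ q}

/-- The product `p ⊗ q` (resolved left to right) of a type `p` with an `A`-invariant type `q`
over the saturated model `S`: `φ(x, y, d) ∈ p ⊗ q` iff for every `a` realizing the restriction
of `p` to `A ∪ d`, the formula `φ(a, y, d)` lies in the `A`-invariant global extension of `q`. -/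
def prodT (L : FirstOrder.Language) [L.Structure M] (A S : Set M) {na nb : ℕ}
    (p : PType L M (Fin na)) (q : PType L M (Fin nb)) : PType L M (Fin na ⊕ Fin nb) :=
  {x | ∀ a : Fin na → M, realizes a (restrictParams (A ∪ Set.range x.2.2) p) →
    ⟨x.1 + na,
      x.2.1.relabel (Sum.elim
        (Sum.elim (fun i : Fin na => Sum.inr (Fin.natAdd x.1 i)) Sum.inl)
        (fun j : Fin x.1 => Sum.inr (Fin.castAdd na j))),
      Fin.append x.2.2 a⟩ ∈ globExtT L A S q}

/-- A Dedekind partition with `n` cuts of a sequence with the same EM-type as `b`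
which is `m`-distal. -/
structure DistalWitness (L : FirstOrder.Language) (M : Type) [L.Structure M] {ι α : Type}
    [LinearOrder ι] (b : ι → α → M) (n m : ℕ) : Type 1 where
  κι : Type
  [inst : LinearOrder κι]
  c : κι → α → M
  part : κι → Fin (n + 1)
  same : SameEM L b c
  ded : IsDedekindPartition part
  dist : MDistalPartition L ∅ c part m

lemma indiscOver_mono (L : FirstOrder.Language) [L.Structure M] {A B : Set M} (h : A ⊆ B)
    {ι α : Type} [LinearOrder ι] {b : ι → α → M} (hb : indiscOver L B b) : indiscOver L A b :=
  fun N f g hf hg k a ha φ => hb N f g hf hg k a (fun i => h (ha i)) φ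

/-- If truth and falsity of `P` can both be found `R`-above every point, then there is an
`R`-chain along which `P` alternates. -/
lemma exists_alternating {X : Type} [Nonempty X] (R : X → X → Prop) (P : X → Prop)
    (h1 : ∀ x, ∃ y, R x y ∧ P y) (h2 : ∀ x, ∃ y, R x y ∧ ¬ P y) :
    ∃ s : ℕ → X, ∀ n, R (s n) (s (n + 1)) ∧ (P (s (n + 1)) ↔ ¬ P (s n)) := by
  have h : ∀ x, ∃ y, R x y ∧ (P y ↔ ¬ P x) := by
    intro x
    by_cases hx : P x
    · obtain ⟨y, hy, hP⟩ := h2 x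
      exact ⟨y, hy, by simp [hx, hP]⟩
    · obtain ⟨y, hy, hP⟩ := h1 x
      exact ⟨y, hy, by simp [hx, hP]⟩
  choose F hF using h
  obtain ⟨x⟩ := ‹Nonempty X›
  refine ⟨fun n => F^[n] x, fun n => ?_⟩
  simp only [Function.iterate_succ_apply']
  exact hF _

/-- NIP: no formula alternates forever along an indiscernible sequence indexed by `ℕ`. -/
lemma no_alternation (L : FirstOrder.Language) [L.Structure M] (hnip : IsNIP L M)
    {β : Type} {e : ℕ → β → M} (he : indiscOver L ∅ e) {k : ℕ} (φ : L.Formula (β ⊕ Fin k))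
    (d : Fin k → M)
    (h : ∀ n, φ.Realize (Sum.elim (e (n + 1)) d) ↔ ¬ φ.Realize (Sum.elim (e n) d)) : False := by
  obtain ⟨N, hN⟩ := hnip β ℕ e he k φ d
  obtain ⟨j, hj⟩ := hN (fun i => (i : ℕ)) (fun _ _ hij => hij)
  have := h j
  simp only [Fin.val_castSucc, Fin.val_succ] at hj
  tauto

lemma indiscOver_comp (L : FirstOrder.Language) [L.Structure M] {A : Set M} {ι κι α : Type}
    [LinearOrder ι] [LinearOrder κι] {b : ι → α → M} (hb : indiscOver L A b) {s : κι → ι}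
    (hs : StrictMono s) : indiscOver L A (fun n => b (s n)) :=
  fun N f g hf hg => hb N (s ∘ f) (s ∘ g) (hs.comp hf) (hs.comp hg)

/-- Completeness of the limit type of an indiscernible sequence. -/
lemma lim_dichotomy (L : FirstOrder.Language) [L.Structure M] (hnip : IsNIP L M)
    {ι : Type} [LinearOrder ι] [Nonempty ι] {b : ι → M}
    (hb : indiscOver L ∅ (fun i => fun _ : Fin 1 => b i))
    {k : ℕ} (φ : L.Formula (Fin 1 ⊕ Fin k)) (d : Fin k → M) :
    (∃ i₀, ∀ i ≥ i₀, φ.Realize (Sum.elim (fun _ : Fin 1 => b i) d)) ∨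
    (∃ i₀, ∀ i ≥ i₀, ¬ φ.Realize (Sum.elim (fun _ : Fin 1 => b i) d)) := by
  by_contra! hcon
  obtain ⟨h1, h2⟩ := hcon
  obtain ⟨s, hs⟩ := exists_alternating (fun i j : ι => i ≤ j)
    (fun i => φ.Realize (Sum.elim (fun _ : Fin 1 => b i) d)) h2 h1
  -- the chain is strict because consecutive truth values differ
  have hmono : StrictMono s := by
    refine strictMono_nat_of_lt_succ fun n => lt_of_le_of_ne (hs n).1 fun heq => ?_
    have := (hs n).2
    rw [← heq] at this
    tauto
  exact no_alternation L hnip (indiscOver_comp L hb hmono) φ d fun n => (hs n).2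

/-- Pairing up two mutually indiscernible sequences along `ℕ` gives an indiscernible sequence. -/
lemma indisc_pairs (L : FirstOrder.Language) [L.Structure M] {ι κι : Type}
    [LinearOrder ι] [LinearOrder κι] {b : ι → M} {c : κι → M}
    (hb : indiscOver L (Set.range c) (fun i => fun _ : Fin 1 => b i))
    (hc : indiscOver L (Set.range b) (fun i => fun _ : Fin 1 => c i))
    {s : ℕ → ι} {t : ℕ → κι} (hs : StrictMono s) (ht : StrictMono t) :
    indiscOver L ∅ (fun n => (![b (s n), c (t n)] : Fin 2 → M)) := by
  intro N f g hf hg k a ha φ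
  have hE : IsEmpty (Fin k) := ⟨fun i => (ha i).elim⟩
  -- the entries of `c`, respectively `b`, are turned into parameters
  have h1 := hb N (s ∘ f) (s ∘ g) (hs.comp hf) (hs.comp hg) N (fun n => c (t (f n)))
    (fun n => ⟨_, rfl⟩)
    (φ.relabel (Sum.elim (fun x => ![Sum.inl (x.1, 0), Sum.inr x.1] x.2) fun i => hE.elim i))
  have h2 := hc N (t ∘ f) (t ∘ g) (ht.comp hf) (ht.comp hg) N (fun n => b (s (g n)))
    (fun n => ⟨_, rfl⟩)
    (φ.relabel (Sum.elim (fun x => ![Sum.inr x.1, Sum.inl (x.1, 0)] x.2) fun i => hE.elim i))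
  rw [Formula.realize_relabel, Formula.realize_relabel] at h1 h2
  have key : ∀ (u v w : (Fin N × Fin 2) ⊕ Fin k → M), u = v → v = w →
      (φ.Realize u ↔ φ.Realize w) := by
    rintro u v w rfl rfl; rfl
  refine (key _ _ _ ?_ rfl).trans (h1.trans ((key _ _ _ ?_ rfl).trans (h2.trans
    (key _ _ _ ?_ rfl))))
  all_goals
    funext x
    rcases x with ⟨n, v⟩ | i
    · fin_cases v <;> rfl
    · exact hE.elim i

/-- A realization of the limit type over `S` satisfies exactly the formulas over `S` that hold
eventually along the sequence. -/
lemma realizes_lim_iff (L : FirstOrder.Language) [L.Structure M] (hnip : IsNIP L M)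
    {ι : Type} [LinearOrder ι] [Nonempty ι] {b : ι → M}
    (hb : indiscOver L ∅ (fun i => fun _ : Fin 1 => b i)) {S : Set M} {a : M}
    (ha : realizes (fun _ : Fin 1 => a) (restrictParams S (limTp L b)))
    {k : ℕ} (φ : L.Formula (Fin 1 ⊕ Fin k)) (d : Fin k → M) (hd : ∀ i, d i ∈ S) :
    (φ.Realize (Sum.elim (fun _ : Fin 1 => a) d) →
      ∃ i₀, ∀ i ≥ i₀, φ.Realize (Sum.elim (fun _ : Fin 1 => b i) d)) ∧
    (¬ φ.Realize (Sum.elim (fun _ : Fin 1 => a) d) →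
      ∃ i₀, ∀ i ≥ i₀, ¬ φ.Realize (Sum.elim (fun _ : Fin 1 => b i) d)) := by
  have hpos : (∃ i₀, ∀ i ≥ i₀, φ.Realize (Sum.elim (fun _ : Fin 1 => b i) d)) →
      φ.Realize (Sum.elim (fun _ : Fin 1 => a) d) := fun h => ha ⟨k, φ, d⟩ ⟨h, hd⟩
  have hneg : (∃ i₀, ∀ i ≥ i₀, ¬ φ.Realize (Sum.elim (fun _ : Fin 1 => b i) d)) →
      ¬ φ.Realize (Sum.elim (fun _ : Fin 1 => a) d) := fun h =>
    Formula.realize_not.1 (ha ⟨k, φ.not, d⟩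
      ⟨h.imp fun i₀ h i hi => Formula.realize_not.2 (h i hi), hd⟩)
  have := lim_dichotomy L hnip hb φ d
  tauto

/-- A formula cannot have different iterated limits along two mutually indiscernible
sequences. -/
lemma no_iterated_limits (L : FirstOrder.Language) [L.Structure M] (hnip : IsNIP L M)
    {ι κι : Type} [LinearOrder ι] [LinearOrder κι] {b : ι → M} {c : κι → M}
    (hb : indiscOver L (Set.range c) (fun i => fun _ : Fin 1 => b i))
    (hc : indiscOver L (Set.range b) (fun i => fun _ : Fin 1 => c i))
    {k : ℕ} (χ : L.Formula (Fin 2 ⊕ Fin k)) (d : Fin k → M)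
    (h1 : ∃ i₀, ∀ i ≥ i₀, ∃ j₀, ∀ j ≥ j₀, χ.Realize (Sum.elim ![b i, c j] d))
    (h2 : ∃ j₀, ∀ j ≥ j₀, ∃ i₀, ∀ i ≥ i₀, ¬ χ.Realize (Sum.elim ![b i, c j] d)) : False := by
  obtain ⟨i₀, h1⟩ := h1
  obtain ⟨j₀, h2⟩ := h2
  by_cases hι : ∃ m : ι, ∀ i, i ≤ m
  · obtain ⟨m, hm⟩ := hι
    obtain ⟨j₁, hj₁⟩ := h1 m (hm _)
    obtain ⟨i₁, hi₁⟩ := h2 (max j₀ j₁) (le_max_left _ _)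
    exact hi₁ m (hm _) (hj₁ _ (le_max_right _ _))
  by_cases hκ : ∃ m : κι, ∀ j, j ≤ m
  · obtain ⟨m, hm⟩ := hκ
    obtain ⟨i₁, hi₁⟩ := h2 m (hm _)
    obtain ⟨j₁, hj₁⟩ := h1 (max i₀ i₁) (le_max_left _ _)
    exact hi₁ _ (le_max_right _ _) (hj₁ m (hm _))
  push Not at hι hκ
  have : Nonempty (ι × κι) := ⟨(i₀, j₀)⟩
  obtain ⟨s, hs⟩ := exists_alternating (fun x y : ι × κι => x.1 < y.1 ∧ x.2 < y.2)
    (fun x => χ.Realize (Sum.elim ![b x.1, c x.2] d)) (by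
      rintro ⟨i, j⟩
      obtain ⟨i', hi'⟩ := hι i
      obtain ⟨j', hj'⟩ := hκ j
      obtain ⟨j₁, hj₁⟩ := h1 (max i' i₀) (le_max_right _ _)
      exact ⟨(max i' i₀, max j' j₁), ⟨lt_max_of_lt_left hi', lt_max_of_lt_left hj'⟩,
        hj₁ _ (le_max_right _ _)⟩) (by
      rintro ⟨i, j⟩
      obtain ⟨i', hi'⟩ := hι i
      obtain ⟨j', hj'⟩ := hκ j
      obtain ⟨i₁, hi₁⟩ := h2 (max j' j₀) (le_max_right _ _)
      exact ⟨(max i' i₁, max j' j₀), ⟨lt_max_of_lt_left hi', lt_max_of_lt_left hj'⟩,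
        hi₁ _ (le_max_right _ _)⟩)
  exact no_alternation L hnip
    (indisc_pairs L hb hc (strictMono_nat_of_lt_succ fun n => (hs n).1.1)
      (strictMono_nat_of_lt_succ fun n => (hs n).1.2)) χ d fun n => (hs n).2

/-- If `a` realizes `lim b` over `S` and `a'` realizes `lim c` over `S a`, then `a` realizes
`lim b` over `S a'`. -/
lemma realizes_swap (L : FirstOrder.Language) [L.Structure M] (hnip : IsNIP L M)
    {ι κι : Type} [LinearOrder ι] [LinearOrder κι] [Nonempty ι] [Nonempty κι]
    {b : ι → M} {c : κι → M}
    (hb : indiscOver L (Set.range c) (fun i => fun _ : Fin 1 => b i))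
    (hc : indiscOver L (Set.range b) (fun i => fun _ : Fin 1 => c i))
    {S : Set M} (hbS : Set.range b ⊆ S) (hcS : Set.range c ⊆ S) {a a' : M}
    (ha : realizes (fun _ : Fin 1 => a) (restrictParams S (limTp L b)))
    (ha' : realizes (fun _ : Fin 1 => a') (restrictParams (insert a S) (limTp L c))) :
    realizes (fun _ : Fin 1 => a) (restrictParams (insert a' S) (limTp L b)) := by
  classical
  rintro ⟨k, φ, e⟩ ⟨⟨i₀, hi₀⟩, he⟩
  dsimp only at hi₀ he ⊢
  have heS : ∀ i, e i ≠ a' → e i ∈ S := fun i hi => (he i).resolve_left hi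
  by_contra hcon
  -- `Θ x y` is `φ(x)` with the parameter `a'` replaced by `y` throughout
  let E : M → Fin k → M := fun y i => if e i = a' then y else e i
  let Θ : M → M → Prop := fun x y => φ.Realize (Sum.elim (fun _ : Fin 1 => x) (E y))
  have hE : E a' = e := by
    funext i
    by_cases h : e i = a' <;> simp [E, h]
  have hES : ∀ y ∈ S, ∀ i, E y i ∈ S := by
    intro y hy i
    by_cases h : e i = a'
    · simpa [E, h] using hy
    · simpa [E, h] using heS i h
  have hb0 := indiscOver_mono L (Set.empty_subset _) hb
  have hc0 := indiscOver_mono L (Set.empty_subset _) hc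
  have hx : ∀ y ∈ S, ¬ Θ a y → ∃ i₀, ∀ i ≥ i₀, ¬ Θ (b i) y := fun y hy =>
    (realizes_lim_iff L hnip hb0 ha φ (E y) (hES y hy)).2
  -- `Θ x ·` as a formula in the second variable, with `x` as an additional last parameter
  let ψ : L.Formula (Fin 1 ⊕ Fin (k + 1)) := φ.relabel (Sum.elim
    (fun _ => Sum.inr (Fin.last k)) fun i => if e i = a' then Sum.inl 0 else Sum.inr i.castSucc)
  have hψ : ∀ x y, ψ.Realize (Sum.elim (fun _ : Fin 1 => y) (Fin.snoc (E x) x)) ↔ Θ x y := by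
    intro x y
    simp only [ψ, Θ, Formula.realize_relabel]
    refine iff_of_eq (congrArg _ ?_)
    funext v
    rcases v with v | i
    · simp
    · by_cases h : e i = a' <;> simp [E, h]
  have hsnoc : ∀ x ∈ insert a S, ∀ i, (Fin.snoc (E x) x : Fin (k + 1) → M) i ∈ insert a S := by
    intro x hx i
    refine Fin.lastCases ?_ (fun i => ?_) i
    · simpa using hx
    · by_cases h : e i = a'
      · simpa [E, h] using hx
      · simpa [E, h] using Or.inr (heS i h)
  have hy := fun x hx => realizes_lim_iff L hnip hc0 ha' ψ (Fin.snoc (E x) x) (hsnoc x hx)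
  simp only [hψ] at hy
  let χ : L.Formula (Fin 2 ⊕ Fin k) := φ.relabel (Sum.elim
    (fun _ => Sum.inl 0) fun i => if e i = a' then Sum.inl 1 else Sum.inr i)
  have hχ : ∀ x y, χ.Realize (Sum.elim ![x, y] e) ↔ Θ x y := by
    intro x y
    simp only [χ, Θ, Formula.realize_relabel]
    refine iff_of_eq (congrArg _ ?_)
    funext v
    rcases v with v | i
    · simp
    · by_cases h : e i = a' <;> simp [E, h]
  refine no_iterated_limits L hnip hb hc χ e ⟨i₀, fun i hi => ?_⟩ ?_
  · simp only [hχ]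
    refine (hy (b i) (Or.inr (hbS ⟨i, rfl⟩))).1 ?_
    have := hi₀ i hi
    simpa only [Θ, hE] using this
  · simp only [hχ]
    obtain ⟨j₀, hj₀⟩ := (hy a (Or.inl rfl)).2 (by simpa only [Θ, hE] using hcon)
    exact ⟨j₀, fun j hj => hx _ (hcS ⟨j, rfl⟩) (hj₀ j hj)⟩

lemma realizes_restrict_mono (L : FirstOrder.Language) [L.Structure M] {β : Type} {f : β → M}
    {S S' : Set M} (h : S ⊆ S') {p : PType L M β} (hf : realizes f (restrictParams S' p)) :
    realizes f (restrictParams S p) :=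
  fun x hx => hf x ⟨hx.1, fun i => h (hx.2 i)⟩

/-- A formula lies in `p ⊗ q` iff it holds at all `(a, a')` with `a` realizing `p` over the
parameters and `a'` realizing `q` over the parameters and `a`. -/
lemma mem_nProd_two (L : FirstOrder.Language) [L.Structure M] (A : Set M)
    (p q : PType L M (Fin 1)) {k : ℕ} (φ : L.Formula (Fin 2 ⊕ Fin k)) (d : Fin k → M) :
    ⟨k, φ, d⟩ ∈ nProd L A 2 ![p, q] ↔
      ∀ a, realizes (fun _ : Fin 1 => a) (restrictParams (A ∪ Set.range d) p) →
      ∀ a', realizes (fun _ : Fin 1 => a') (restrictParams (insert a (A ∪ Set.range d)) q) →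
        φ.Realize (Sum.elim ![a, a'] d) := by
  have hS : ∀ a, A ∪ Set.range (Fin.snoc d a : Fin (k + 1) → M) =
      insert a (A ∪ Set.range d) := by
    intro a
    rw [Fin.range_snoc, Set.union_insert]
  simp only [nProd, Set.mem_ofPred_eq, Formula.realize_relabel, Matrix.cons_val_zero,
    Matrix.cons_val_succ, hS]
  refine forall_congr' fun a => imp_congr_right fun _ => forall_congr' fun a' =>
    imp_congr_right fun _ => iff_of_eq (congrArg _ ?_)
  funext v
  rcases v with v | i
  · fin_cases v
    · simp [Fin.snoc]
    · change (Fin.snoc (Fin.snoc d a : Fin (k + 1) → M) a' : Fin (k + 2) → M)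
        (Fin.last (k + 1)) = a'
      simp
  · simp

/-- in an NIP theory, the limit types of two mutually indiscernible sequences
commute. -/
theorem stmt7 (L : FirstOrder.Language) (M : Type) [L.Structure M] {ι κι : Type}
    [LinearOrder ι] [LinearOrder κι] [Infinite ι] [Infinite κι]
    (hnip : IsNIP L M) (b : ι → M) (c : κι → M)
    (hb : indiscOver L (Set.range c) (fun i => fun _ : Fin 1 => b i))
    (hc : indiscOver L (Set.range b) (fun i => fun _ : Fin 1 => c i)) :
    ∀ (k : ℕ) (φ : L.Formula (Fin 2 ⊕ Fin k)) (d : Fin k → M),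
      ⟨k, φ, d⟩ ∈ nProd L (Set.range b ∪ Set.range c) 2 ![limTp L b, limTp L c] ↔
      ⟨k, φ.relabel (Sum.map (fun v : Fin 2 => v.rev) id), d⟩ ∈
        nProd L (Set.range b ∪ Set.range c) 2 ![limTp L c, limTp L b] := by
  intro k φ d
  rw [mem_nProd_two, mem_nProd_two]
  have hrev : ∀ a a' : M,
      (φ.relabel (Sum.map (fun v : Fin 2 => v.rev) id)).Realize (Sum.elim ![a', a] d) ↔
        φ.Realize (Sum.elim ![a, a'] d) := by
    intro a a'
    rw [Formula.realize_relabel]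
    refine iff_of_eq (congrArg _ ?_)
    funext v
    rcases v with v | i
    · fin_cases v <;> rfl
    · rfl
  have hbS : Set.range b ⊆ Set.range b ∪ Set.range c ∪ Set.range d :=
    fun x hx => Or.inl (Or.inl hx)
  have hcS : Set.range c ⊆ Set.range b ∪ Set.range c ∪ Set.range d :=
    fun x hx => Or.inl (Or.inr hx)
  constructor
  · intro h a' ha' a ha
    exact (hrev a a').2 (h a (realizes_restrict_mono L (Set.subset_insert _ _) ha) a'
      (realizes_swap L hnip hc hb hcS hbS ha' ha))
  · intro h a ha a' ha'
    exact (hrev a a').1 (h a' (realizes_restrict_mono L (Set.subset_insert _ _) ha') a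
      (realizes_swap L hnip hb hc hbS hcS ha ha'))

end DR
end

section
/- The theory ACF of algebraically closed fields has infinite (ω) distality rank: for every n ≥ 1, ACF is not n-distal. -/
/-!
The first-order language of rings is invariant under field automorphisms, and in an algebraically
closed field of infinite transcendence degree any two finite tuples algebraically independent over
the prime ring are conjugate under an automorphism (`exists_ringEquiv_of_algebraicIndependent`), so
they have the same type (`eqTp_of_algebraicIndependent`). A monster model has infinite
transcendence degree, because the type saying that `m` variables are algebraically independent is
finitely satisfiable for every `m` (`aleph0_le_trdeg`).

Take an algebraically independent family indexed by `Fin (n + 2) ×ₗ ℤ` together with `n` further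
elements, which play the role of `a₀, …, a_{n-1}`, and let `a_n` be their sum. Dropping any one of
`a₀, …, a_n` leaves an independent family (`algebraicIndependent_poly`), so every `n` of them
insert indiscernibly. All of them together do not: `a_n = a₀ + ⋯ + a_{n-1}`, while no such relation
holds between `n + 1` terms of the sequence.
-/


open FirstOrder Language Set

namespace DR

variable {M : Type}

variable {M : Type}

/-! ### Algebraically independent tuples have the same type -/

/-- The prime ring of `K`, that is the image of `ℤ`. Algebraic independence over it is the same as
over the prime field, in every characteristic, and its elements are values of constant terms. -/
abbrev PrimeRing (K : Type) [Field K] : Subring K := (Int.castRingHom K).range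

/-- The bijection `e` between transcendence bases induces an automorphism; compared with
`IsAlgClosed.equivOfTranscendenceBasis`, its action on the basis is recorded. -/
theorem exists_ringEquiv_of_isTranscendenceBasis {R K : Type} [CommRing R] [Field K]
    [Algebra R K] [IsAlgClosed K] {ι κ : Type} {v : ι → K} {w : κ → K} (e : ι ≃ κ)
    (hv : IsTranscendenceBasis R v) (hw : IsTranscendenceBasis R w) :
    ∃ σ : K ≃+* K, ∀ i, σ (v i) = w (e i) := by
  let := IsAlgClosed.isAlgClosure_of_transcendence_basis v hv
  let := IsAlgClosed.isAlgClosure_of_transcendence_basis w hw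
  let E : Algebra.adjoin R (Set.range v) ≃ₐ[R] Algebra.adjoin R (Set.range w) :=
    (hv.1.aevalEquiv.symm.trans (MvPolynomial.renameEquiv R e)).trans hw.1.aevalEquiv
  refine ⟨IsAlgClosure.equivOfEquiv K K E.toRingEquiv, fun i => ?_⟩
  have hi : v i = algebraMap (Algebra.adjoin R (Set.range v)) K
      (hv.1.aevalEquiv (MvPolynomial.X i)) := by simp
  rw [hi, IsAlgClosure.equivOfEquiv_algebraMap]
  simp [E]

theorem exists_ringEquiv_of_algebraicIndependent {R K : Type} [CommRing R] [IsDomain R] [Field K]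
    [Algebra R K] [IsAlgClosed K] (hinf : Cardinal.aleph0 ≤ Algebra.trdeg R K)
    {β : Type} [Finite β] {x y : β → K}
    (hx : AlgebraicIndependent R x) (hy : AlgebraicIndependent R y) :
    ∃ σ : K ≃+* K, ∀ i, σ (x i) = y i := by
  obtain ⟨s, hxs, hs⟩ := exists_isTranscendenceBasis_superset (AlgebraicIndependent.to_subtype_range hx)
  obtain ⟨t, hyt, ht⟩ := exists_isTranscendenceBasis_superset (AlgebraicIndependent.to_subtype_range hy)
  have hinj : Function.Injective (algebraMap R K) := hx.algebraMap_injective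
  have : FaithfulSMul R K := (faithfulSMul_iff_algebraMap_injective R K).mpr hinj
  let x' : β → s := fun i => ⟨x i, hxs ⟨i, rfl⟩⟩
  let y' : β → t := fun i => ⟨y i, hyt ⟨i, rfl⟩⟩
  have hx' : Function.Injective x' := fun i j h => hx.injective (congrArg Subtype.val h)
  have hy' : Function.Injective y' := fun i j h => hy.injective (congrArg Subtype.val h)
  let f : Set.range x' ↪ t :=
    (Equiv.ofInjective x' hx').symm.toEmbedding.trans ⟨y', hy'⟩
  obtain ⟨g, hg⟩ := Cardinal.extend_function_of_lt f
    (by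
      rw [hs.cardinalMk_eq_trdeg]
      exact (Cardinal.lt_aleph0_of_finite _).trans_le hinf)
    (Cardinal.eq.1 (hs.cardinalMk_eq_trdeg.trans ht.cardinalMk_eq_trdeg.symm))
  obtain ⟨σ, hσ⟩ := exists_ringEquiv_of_isTranscendenceBasis g hs ht
  refine ⟨σ, fun i => ?_⟩
  have h1 := hσ (x' i)
  have h2 := hg ⟨x' i, i, rfl⟩
  have h3 : f ⟨x' i, i, rfl⟩ = y' i := by
    simp only [f, Function.Embedding.trans_apply, Function.Embedding.coeFn_mk]
    congr 1
    exact Equiv.ofInjective_symm_apply hx' i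
  rw [h2, h3] at h1
  exact h1

theorem eqTp_of_algebraicIndependent {K : Type} [Field K] [IsAlgClosed K]
    [FirstOrder.Ring.CompatibleRing K]
    (hinf : Cardinal.aleph0 ≤ Algebra.trdeg (PrimeRing K) K)
    {β : Type} [Finite β] {x y : β → K}
    (hx : AlgebraicIndependent (PrimeRing K) x) (hy : AlgebraicIndependent (PrimeRing K) y) :
    EqTp FirstOrder.Language.ring (∅ : Set K) x y := by
  intro k a ha φ
  obtain ⟨σ, hσ⟩ := exists_ringEquiv_of_algebraicIndependent hinf hx hy
  have h : Sum.elim y a = FirstOrder.Ring.languageEquivEquivRingEquiv.symm σ ∘ Sum.elim x a := by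
    funext z
    rcases z with i | j
    · exact (hσ i).symm
    · exact (ha j).elim
  rw [h, StrongHomClass.realize_formula]

/-! ### Saturation and infinite transcendence degree -/

/-- A polynomial without parameters, read with coefficients in `K`. -/
noncomputable def toPoly (K : Type) [Field K] (m : ℕ) :
    FreeCommRing (Fin m ⊕ Fin 0) →+* MvPolynomial (Fin m) K :=
  FreeCommRing.lift (Sum.elim MvPolynomial.X (fun j => j.elim0))

theorem eval_toPoly {K : Type} [Field K] {m : ℕ} (v : Fin m → K) (a : Fin 0 → K)
    (q : FreeCommRing (Fin m ⊕ Fin 0)) :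
    MvPolynomial.eval v (toPoly K m q) = FreeCommRing.lift (Sum.elim v a) q := by
  have : (MvPolynomial.eval v).comp (toPoly K m) = FreeCommRing.lift (Sum.elim v a) := by
    refine FreeCommRing.hom_ext fun z => ?_
    rcases z with i | j
    · simp [toPoly]
    · exact j.elim0
  exact RingHom.congr_fun this q

theorem exists_toPoly_eq {K : Type} [Field K] {m : ℕ} (P : MvPolynomial (Fin m) (PrimeRing K)) :
    ∃ q, toPoly K m q = MvPolynomial.map (algebraMap (PrimeRing K) K) P := by
  induction P using MvPolynomial.induction_on with
  | C r =>
    obtain ⟨_, z, rfl⟩ := r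
    exact ⟨(z : FreeCommRing (Fin m ⊕ Fin 0)), by
      rw [map_intCast, MvPolynomial.map_C]
      exact (map_intCast (MvPolynomial.C (σ := Fin m) (R := K)) z).symm⟩
  | add p q hp hq =>
    obtain ⟨p', hp⟩ := hp
    obtain ⟨q', hq⟩ := hq
    exact ⟨p' + q', by simp [hp, hq]⟩
  | mul_X p i hp =>
    obtain ⟨p', hp⟩ := hp
    exact ⟨p' * FreeCommRing.of (Sum.inl i), by simp [hp]; simp [toPoly]⟩

/-- The formula `q ≠ 0`. -/
noncomputable def neZeroFormula {γ : Type} (q : FreeCommRing γ) :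
    FirstOrder.Language.ring.Formula γ :=
  ((FirstOrder.Ring.termOfFreeCommRing q).equal (FirstOrder.Ring.termOfFreeCommRing 0)).not

theorem realize_neZeroFormula {K : Type} [Field K] [FirstOrder.Ring.CompatibleRing K] {γ : Type}
    (q : FreeCommRing γ) (v : γ → K) :
    (neZeroFormula q).Realize v ↔ FreeCommRing.lift v q ≠ 0 := by
  simp [neZeroFormula, Formula.realize_not, Formula.realize_equal]

/-- Saturation realizes, for each `m`, the type over `∅` of `m` algebraically independent
elements. -/
theorem exists_algebraicIndependent {K : Type} [Field K] [IsAlgClosed K]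
    [FirstOrder.Ring.CompatibleRing K] (hmon : IsMonster FirstOrder.Language.ring K) (m : ℕ) :
    ∃ v : Fin m → K, AlgebraicIndependent (PrimeRing K) v := by
  have : Infinite K := IsAlgClosed.instInfinite
  let p : PType FirstOrder.Language.ring K (Fin m) :=
    Set.range fun q : {q // toPoly K m q ≠ 0} => ⟨0, neZeroFormula q.1, fun j => j.elim0⟩
  obtain ⟨v, hv⟩ := hmon (Fin m) p
    ((Cardinal.lt_aleph0_of_finite _).trans_le (Cardinal.aleph0_le_mk K))
    (by
      have h0 : paramSet p = ∅ := by
        rw [Set.eq_empty_iff_forall_notMem]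
        intro z hz
        simp only [paramSet, Set.mem_iUnion] at hz
        obtain ⟨_, ⟨q, rfl⟩, ⟨j, _⟩⟩ := hz
        exact j.elim0
      rw [h0]
      exact (Cardinal.lt_aleph0_of_finite _).trans_le (Cardinal.aleph0_le_mk K))
    (by
      intro s hs
      choose q hq using fun x : s => hs x.2
      -- The product of finitely many nonzero polynomials is nonzero, hence has a nonzero value.
      have hne : ∏ x : s, toPoly K m (q x).1 ≠ 0 :=
        Finset.prod_ne_zero_iff.2 fun x _ => (q x).2
      obtain ⟨v, hv⟩ : ∃ v, MvPolynomial.eval v (∏ x : s, toPoly K m (q x).1) ≠ 0 := by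
        by_contra! h
        exact hne (MvPolynomial.funext fun v => by simpa using h v)
      refine ⟨v, fun _ => Set.mem_univ _, fun x hx => ?_⟩
      rw [map_prod, Finset.prod_ne_zero_iff] at hv
      rw [← show _ = x from hq ⟨x, hx⟩, realize_neZeroFormula, ← eval_toPoly]
      exact hv ⟨x, hx⟩ (Finset.mem_univ _))
  refine ⟨v, (injective_iff_map_eq_zero _).2 fun P hP => ?_⟩
  by_contra hP0
  obtain ⟨q, hq⟩ := exists_toPoly_eq P
  have hq0 : toPoly K m q ≠ 0 := by
    rw [hq]
    exact fun h => hP0 (MvPolynomial.map_injective _ Subtype.val_injective (by simpa using h))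
  have h := hv _ ⟨⟨q, hq0⟩, rfl⟩
  rw [realize_neZeroFormula, ← eval_toPoly, hq, MvPolynomial.eval_map] at h
  exact h hP

theorem aleph0_le_trdeg {K : Type} [Field K] [IsAlgClosed K]
    [FirstOrder.Ring.CompatibleRing K] (hmon : IsMonster FirstOrder.Language.ring K) :
    Cardinal.aleph0 ≤ Algebra.trdeg (PrimeRing K) K := by
  refine Cardinal.aleph0_le.2 fun m => ?_
  obtain ⟨v, hv⟩ := exists_algebraicIndependent hmon m
  simpa using hv.cardinalMk_le_trdeg

theorem exists_algebraicIndependent_of_countable {R K : Type} [CommRing R] [IsDomain R] [Field K]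
    [Algebra R K] [FaithfulSMul R K] (hinf : Cardinal.aleph0 ≤ Algebra.trdeg R K)
    (β : Type) [Countable β] : ∃ c : β → K, AlgebraicIndependent R c := by
  obtain ⟨s, hs⟩ := exists_isTranscendenceBasis R K
  have h : Cardinal.mk β ≤ Cardinal.mk s := by
    rw [hs.cardinalMk_eq_trdeg]
    exact (Cardinal.mk_le_aleph0).trans hinf
  obtain ⟨f⟩ := h
  exact ⟨_, hs.1.comp f f.injective⟩

/-! ### The inserted elements -/

/-- The generic form of the sequence with the inserted elements: the indeterminates
`X (inl i)` form the sequence and the inserted elements are the `X (inr j)` followed by their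
sum. -/
noncomputable def poly (R : Type) [CommRing R] (ι : Type) (n : ℕ) :
    ι ⊕ Fin (n + 1) → MvPolynomial (ι ⊕ Fin n) R :=
  Sum.elim (fun i => MvPolynomial.X (Sum.inl i))
    (Fin.lastCases (∑ j : Fin n, MvPolynomial.X (Sum.inr j))
      (fun j => MvPolynomial.X (Sum.inr j)))

theorem algebraicIndependent_poly (R : Type) [CommRing R] (ι : Type) (n : ℕ) (j : Fin (n + 1)) :
    AlgebraicIndependent R fun x : {x : ι ⊕ Fin (n + 1) // x ≠ Sum.inr j} => poly R ι n x := by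
  -- It suffices to map the polynomials to distinct indeterminates by an algebra homomorphism.
  suffices ∃ ψ : MvPolynomial (ι ⊕ Fin n) R →ₐ[R] MvPolynomial (ι ⊕ Fin (n + 1)) R,
      ∀ x, x ≠ Sum.inr j → ψ (poly R ι n x) = MvPolynomial.X x by
    obtain ⟨ψ, hψ⟩ := this
    refine AlgebraicIndependent.of_comp ψ ?_
    have h : (ψ ∘ fun x : {x : ι ⊕ Fin (n + 1) // x ≠ Sum.inr j} => poly R ι n x) =
        MvPolynomial.X ∘ Subtype.val := funext fun x => hψ x.1 x.2
    rw [h]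
    exact (MvPolynomial.algebraicIndependent_X _ R).comp _ Subtype.val_injective
  induction j using Fin.lastCases with
  | last =>
    refine ⟨MvPolynomial.aeval (Sum.elim (fun i => MvPolynomial.X (Sum.inl i))
      (fun i => MvPolynomial.X (Sum.inr i.castSucc))), fun x hx => ?_⟩
    rcases x with i | e
    · simp [poly]
    · induction e using Fin.lastCases with
      | last => exact absurd rfl hx
      | cast i => simp [poly]
  | cast j =>
    -- The missing element is recovered as the sum minus the other summands.
    refine ⟨MvPolynomial.aeval (Sum.elim (fun i => MvPolynomial.X (Sum.inl i))
      (fun i => if i = j then MvPolynomial.X (Sum.inr (Fin.last n)) -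
        ∑ k ∈ Finset.univ.erase j, MvPolynomial.X (Sum.inr k.castSucc)
        else MvPolynomial.X (Sum.inr i.castSucc))), fun x hx => ?_⟩
    rcases x with i | e
    · simp [poly]
    · induction e using Fin.lastCases with
      | last =>
        simp only [poly, Sum.elim_inr, Fin.lastCases_last, map_sum, MvPolynomial.aeval_X]
        rw [← Finset.add_sum_erase _ _ (Finset.mem_univ j), if_pos rfl,
          Finset.sum_congr rfl fun k hk => if_neg (Finset.ne_of_mem_erase hk)]
        ring
      | cast i =>
        have hij : i ≠ j := by
          rintro rfl
          exact hx rfl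
        simp [poly, hij]

/-! ### The index order and its Dedekind partition -/

theorem insLT_injective {ι : Type} [LinearOrder ι] {m : ℕ} (part : ι → Fin (m + 1)) {N : ℕ}
    {f : Fin N → ι ⊕ Fin m} (hf : ∀ x y, x < y → insLT (cutSet part) (f x) (f y)) :
    Function.Injective f := by
  have irrefl : ∀ z, ¬ insLT (cutSet part) z z := by
    rintro (i | e) h
    · exact lt_irrefl i h
    · rcases h with h | h
      · exact ssubset_irrefl _ h
      · exact lt_irrefl e h.2
  intro x y hxy
  by_contra hne
  rcases lt_or_gt_of_ne hne with h | h
  · exact irrefl _ (hxy ▸ hf _ _ h)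
  · exact irrefl _ (hxy ▸ hf _ _ h)

/-- The partition of `Fin (m + 1) ×ₗ ℤ` into copies of `ℤ`; there is no first or last element in
each piece, so all cuts are Dedekind. -/
def fstPart (m : ℕ) : Fin (m + 1) ×ₗ ℤ → Fin (m + 1) := fun z => (ofLex z).1

theorem isDedekindPartition_fstPart (m : ℕ) : IsDedekindPartition (fstPart m) := by
  have mono : Monotone (fstPart m) := Prod.Lex.monotone_fst
  refine ⟨mono, fun t => ⟨toLex (t, 0), rfl⟩, fun t => ⟨?_, ?_, ?_, ?_, ?_⟩⟩
  · exact ⟨toLex (t.castSucc, 0), le_refl t.castSucc⟩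
  · refine ⟨toLex (t.succ, 0), fun h => ?_⟩
    exact absurd (show t.succ ≤ t.castSucc from h) (not_le.2 Fin.castSucc_lt_succ)
  · intro i hi j hji
    exact (mono hji).trans hi
  · intro i hi
    refine ⟨toLex ((ofLex i).1, (ofLex i).2 + 1), hi, ?_⟩
    rw [Prod.Lex.lt_iff]
    exact Or.inr ⟨rfl, by simp⟩
  · intro i hi
    refine ⟨toLex ((ofLex i).1, (ofLex i).2 - 1), hi, ?_⟩
    rw [Prod.Lex.lt_iff]
    exact Or.inr ⟨rfl, by simp⟩

theorem cutSet_fstPart_ssubset {m : ℕ} {s t : Fin m} (h : s < t) :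
    cutSet (fstPart m) s ⊂ cutSet (fstPart m) t := by
  refine ⟨fun i hi => hi.trans (Fin.castSucc_le_castSucc_iff.2 h.le), fun hsub => ?_⟩
  have h1 : toLex (t.castSucc, (0 : ℤ)) ∈ cutSet (fstPart m) t := le_refl t.castSucc
  have h2 : t.castSucc ≤ s.castSucc := hsub h1
  exact absurd (Fin.castSucc_le_castSucc_iff.1 h2) (not_le.2 h)

/-! ### Failure of distality -/

/-- The formula `x_n = x_0 + ⋯ + x_{n-1}`. -/
noncomputable def sumFormula (n : ℕ) :
    FirstOrder.Language.ring.Formula ((Fin (n + 1) × Unit) ⊕ Fin 0) :=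
  (FirstOrder.Ring.termOfFreeCommRing (FreeCommRing.of (Sum.inl (Fin.last n, ())))).equal
    (FirstOrder.Ring.termOfFreeCommRing
      (∑ j : Fin n, FreeCommRing.of (Sum.inl (j.castSucc, ()))))

theorem realize_sumFormula {K : Type} [Field K] [FirstOrder.Ring.CompatibleRing K] {n : ℕ}
    (v : Fin (n + 1) × Unit → K) (a : Fin 0 → K) :
    (sumFormula n).Realize (Sum.elim v a) ↔
      v (Fin.last n, ()) = ∑ j : Fin n, v (j.castSucc, ()) := by
  simp [sumFormula, Formula.realize_equal]

theorem not_sum_of_algebraicIndependent {R K : Type} [CommRing R] [Nontrivial R] [Field K]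
    [Algebra R K] {n : ℕ} {v : Fin (n + 1) → K} (hv : AlgebraicIndependent R v) :
    v (Fin.last n) ≠ ∑ j : Fin n, v j.castSucc := by
  intro h
  have h1 : (MvPolynomial.X (Fin.last n) : MvPolynomial (Fin (n + 1)) R) =
      ∑ j : Fin n, MvPolynomial.X j.castSucc := hv (by simpa using h)
  have h2 := congrArg (MvPolynomial.eval (Pi.single (Fin.last n) (1 : R))) h1
  simp [Fin.castSucc_ne_last] at h2

/-- ACF has infinite distality rank: it is not `n`-distal for any `n ≥ 1`. -/
theorem stmt18 (K : Type) [Field K] [IsAlgClosed K] [FirstOrder.Ring.CompatibleRing K]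
    (hmon : IsMonster FirstOrder.Language.ring K) :
    ∀ n : ℕ, 1 ≤ n → ¬ TheoryMDistalOver FirstOrder.Language.ring K ∅ n := by
  intro n _ hdist
  have hinf := aleph0_le_trdeg hmon
  have : Countable (Fin (n + 2) ×ₗ ℤ) := inferInstanceAs (Countable (Fin (n + 2) × ℤ))
  obtain ⟨c, hc⟩ := exists_algebraicIndependent_of_countable hinf ((Fin (n + 2) ×ₗ ℤ) ⊕ Fin n)
  -- `d` is the sequence together with all the inserted elements.
  let d : (Fin (n + 2) ×ₗ ℤ) ⊕ Fin (n + 1) → K :=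
    fun x => MvPolynomial.aeval c (poly (PrimeRing K) _ n x)
  have hd : ∀ j, AlgebraicIndependent (PrimeRing K)
      fun x : {x : (Fin (n + 2) ×ₗ ℤ) ⊕ Fin (n + 1) // x ≠ Sum.inr j} => d x :=
    fun j => (algebraicIndependent_poly (PrimeRing K) _ n j).map' hc
  have hd' : ∀ (j : Fin (n + 1)) (N : ℕ) (f : Fin N → (Fin (n + 2) ×ₗ ℤ) ⊕ Fin (n + 1)),
      Function.Injective f → (∀ x, f x ≠ Sum.inr j) →
      AlgebraicIndependent (PrimeRing K) fun z : Fin N × Unit => d (f z.1) := by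
    intro j N f hf hne
    refine (hd j).comp (fun z : Fin N × Unit => ⟨f z.1, hne z.1⟩) ?_
    rintro ⟨x, _⟩ ⟨y, _⟩ h
    exact Prod.ext (hf (congrArg Subtype.val h)) rfl
  let b : Fin (n + 2) ×ₗ ℤ → Unit → K := fun i _ => d (Sum.inl i)
  let a : Fin (n + 1) → Unit → K := fun e _ => d (Sum.inr e)
  have hba : ∀ (N : ℕ) (f : Fin N → (Fin (n + 2) ×ₗ ℤ) ⊕ Fin (n + 1)),
      (tupcat fun j => Sum.elim b a (f j)) = fun z : Fin N × Unit => d (f z.1) := by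
    intro N f
    funext z
    simp only [tupcat]
    rcases f z.1 with i | e <;> rfl
  have hb : indiscOver FirstOrder.Language.ring ∅ b := by
    intro N f g hf hg
    exact eqTp_of_algebraicIndependent hinf
      (hd' 0 N (Sum.inl ∘ f) (Sum.inl_injective.comp hf.injective) fun _ => Sum.inl_ne_inr)
      (hd' 0 N (Sum.inl ∘ g) (Sum.inl_injective.comp hg.injective) fun _ => Sum.inl_ne_inr)
  have hall := hdist _ Unit b hb (fstPart (n + 1)) (isDedekindPartition_fstPart (n + 1)) a
    (by
      intro S hS N f g hf hg hfS hgS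
      obtain ⟨j, hj⟩ : ∃ j, j ∉ S := by
        by_contra! h
        rw [Set.eq_univ_of_forall h, Set.ncard_univ, Nat.card_fin] at hS
        omega
      rw [hba, hba]
      exact eqTp_of_algebraicIndependent hinf
        (hd' j N f (insLT_injective _ hf) fun x h => hj (hfS x j h))
        (hd' j N g (insLT_injective _ hg) fun x h => hj (hgS x j h)))
  -- Compare the inserted elements with `n + 1` terms of the sequence.
  let g : Fin (n + 1) → Fin (n + 2) ×ₗ ℤ := fun i => toLex (i.castSucc, 0)
  have hg : StrictMono g := fun x y h => by
    rw [Prod.Lex.lt_iff]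
    exact Or.inl (Fin.castSucc_lt_castSucc_iff.2 h)
  have key := hall (n + 1) Sum.inr (Sum.inl ∘ g)
    (fun x y h => Or.inl (cutSet_fstPart_ssubset h)) (fun x y h => hg h)
    (fun _ _ _ => Set.mem_univ _) (fun _ _ _ => Set.mem_univ _)
    0 (fun j => j.elim0) (fun j => j.elim0) (sumFormula n)
  rw [hba, hba, realize_sumFormula, realize_sumFormula] at key
  have hg' := (hd' 0 (n + 1) (Sum.inl ∘ g) (Sum.inl_injective.comp hg.injective)
    fun _ => Sum.inl_ne_inr).comp (fun x => (x, ())) fun x y h => congrArg Prod.fst h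
  exact not_sum_of_algebraicIndependent hg' (key.1 (by simp [d, poly]))

end DR
end

section
/- If SDR(T) = 1 (T is strongly 1-distal), then T is NIP. -/
/-!
A formula `φ(x, d)` alternating unboundedly on an indiscernible sequence `b` contradicts strong
`1`-distality, as follows.

Unbounded alternation provides, for every `K`, a block of `K` successive pairs from `b`, with
`φ(·, d)` true at one member of each pair and false at the other (`exists_pairs`). The aim is a
sequence indexed by `ℚ` whose restriction to `ℚ ∖ {0}` imitates the true members, whose element at
`0` imitates a false member, and in which indices are chosen generically. Instead of Ramsey's
theorem, genericity is expressed by ultrafilters: the tensor powers of a nonprincipal ultrafilter on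
`ℕ` concentrate on increasing tuples and are compatible with passing to increasing subtuples
(`tensorPow_strictMono`, `tensorPow_comp`), and they glue to an ultrafilter on functions `ℚ → ℕ`
(`exists_ultrafilter_rat`). A second nonprincipal ultrafilter takes care of `K → ∞`.

The resulting limit type over `d` of a tuple indexed by `ℚ × β`, with `β` countable, is realized in
the monster model (`exists_limit`). Only countably many variables and finitely many parameters are
involved, so the coordinates can be realized one at a time; this works even if the model is
countable, while in a finite model the limits are taken coordinatewise.

In the realized sequence, the part over `ℚ ∖ {0}` is indiscernible over `d` because the tensor
powers do not depend on the chosen increasing indices, and the whole sequence is indiscernible over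
`∅` because its finite subtuples imitate increasing tuples of `b`. Strong `1`-distality at the cut
`0` would make the whole sequence indiscernible over `d`, but `φ(·, d)` fails exactly at `0`
(`not_alternating`). A general `β` reduces to a finite one, since `φ` has finitely many free
variables.
-/

open FirstOrder Language Set

namespace DR

variable {M : Type}

variable {M : Type}

/-! ### Realizing ultralimit types of countable tuples -/

/-- A formula `ψ` in countably many variables only mentions finitely many of them, so it can be
rewritten as a formula in the first `n` variables for some `n`. -/
theorem exists_formula_fin (L : FirstOrder.Language) [L.Structure M] {k : ℕ}
    (ψ : L.Formula (ℕ ⊕ Fin k)) :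
    ∃ (n : ℕ) (χ : L.Formula (Fin n ⊕ Fin k)), ∀ (g : ℕ → M) (d : Fin k → M),
      χ.Realize (Sum.elim (fun j : Fin n => g j) d) ↔ ψ.Realize (Sum.elim g d) := by
  classical
  obtain ⟨n, hn⟩ : ∃ n : ℕ, ∀ m : ℕ, Sum.inl m ∈ BoundedFormula.freeVarFinset ψ → m < n := by
    refine ⟨(BoundedFormula.freeVarFinset ψ).sup (Sum.elim id fun _ => 0) + 1, fun m hm => ?_⟩
    have := Finset.le_sup (f := (Sum.elim id fun _ => 0 : ℕ ⊕ Fin k → ℕ)) hm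
    simp only [Sum.elim_inl, id] at this
    omega
  let r : BoundedFormula.freeVarFinset ψ → Fin n ⊕ Fin k := fun x =>
    match x with
    | ⟨Sum.inl m, h⟩ => Sum.inl ⟨m, hn m h⟩
    | ⟨Sum.inr j, _⟩ => Sum.inr j
  refine ⟨n, BoundedFormula.restrictFreeVar ψ r, fun g d => ?_⟩
  refine BoundedFormula.realize_restrictFreeVar (Sum.elim g d) ?_
  rintro ⟨m | j, h⟩ <;> rfl

/-- `g` and `d` realize the `W`-limit of the types of `F i` (over `d`), as far as the first `n`
coordinates are concerned. -/
def LimitUpTo (L : FirstOrder.Language) [L.Structure M] {I : Type} (W : Ultrafilter I)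
    (F : I → ℕ → M) {k : ℕ} (d : Fin k → M) (n : ℕ) (g : ℕ → M) : Prop :=
  ∀ ψ : L.Formula (Fin n ⊕ Fin k),
    ψ.Realize (Sum.elim (fun j : Fin n => g j) d) ↔
      ∀ᶠ i in W, ψ.Realize (Sum.elim (fun j : Fin n => F i j) d)

/-- One step of the construction: saturation supplies the next coordinate. -/
theorem LimitUpTo.step {L : FirstOrder.Language} [L.Structure M] [Infinite M]
    (hmon : IsMonster L M) {I : Type} {W : Ultrafilter I} {F : I → ℕ → M} {k : ℕ}
    {d : Fin k → M} {n : ℕ} {g : ℕ → M} (hg : LimitUpTo L W F d n g) :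
    ∃ x, LimitUpTo L W F d (n + 1) (Function.update g n x) := by
  classical
  -- the variable `n` stays a variable, the earlier ones and `d` become parameters
  let ρ : Fin (n + 1) ⊕ Fin k → Fin 1 ⊕ Fin (n + k) :=
    Sum.elim (Fin.lastCases (Sum.inl 0) fun j => Sum.inr (Fin.castAdd k j))
      fun j => Sum.inr (Fin.natAdd n j)
  let par : Fin (n + k) → M := Fin.append (fun j : Fin n => g j) d
  have hρ : ∀ (ψ : L.Formula (Fin (n + 1) ⊕ Fin k)) (f : Fin 1 → M),
      (ψ.relabel ρ).Realize (Sum.elim f par) ↔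
        ψ.Realize (Sum.elim (fun j : Fin (n + 1) => Function.update g n (f 0) j) d) := by
    intro ψ f
    rw [Formula.realize_relabel]
    refine iff_of_eq (congrArg _ (funext ?_))
    rintro (j | j)
    · induction j using Fin.lastCases with
      | last => simp [ρ]
      | cast j => simp [ρ, par, Function.update_of_ne j.2.ne]
    · simp [ρ, par]
  let p : PType L M (Fin 1) := {x | ∃ ψ : L.Formula (Fin (n + 1) ⊕ Fin k),
    (∀ᶠ i in W, ψ.Realize (Sum.elim (fun j : Fin (n + 1) => F i j) d)) ∧
      x = ⟨n + k, ψ.relabel ρ, par⟩}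
  have hcard : Cardinal.mk (paramSet p) < Cardinal.mk M := by
    have hsub : paramSet p ⊆ Set.range par := by
      intro y hy
      simp only [paramSet, Set.mem_iUnion] at hy
      obtain ⟨_, ⟨ψ, -, rfl⟩, hy⟩ := hy
      exact hy
    exact (Cardinal.lt_aleph0_iff_set_finite.2 ((Set.finite_range par).subset hsub)).trans_le
      (Cardinal.aleph0_le_mk M)
  have hsat : finSatIn L Set.univ p := by
    intro s hs
    choose ψ hψ hx using fun x : s => hs x.2
    -- the statement that some `y` satisfies every formula in `s`, over the first `n` variables
    let τ : Fin (n + 1) ⊕ Fin k → (Fin n ⊕ Fin k) ⊕ Fin 1 :=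
      Sum.elim (Fin.lastCases (Sum.inr 0) fun j => Sum.inl (Sum.inl j))
        fun j => Sum.inl (Sum.inr j)
    let χ : L.Formula (Fin n ⊕ Fin k) :=
      ((Formula.iInf fun x : s => ψ x).relabel τ).iExs (Fin 1)
    have hτ : ∀ (h : ℕ → M) (y : Fin 1 → M),
        (Sum.elim (Sum.elim (fun j : Fin n => h j) d) y) ∘ τ =
          Sum.elim (fun j : Fin (n + 1) => Function.update h n (y 0) j) d := by
      intro h y
      funext j
      rcases j with j | j
      · induction j using Fin.lastCases with
        | last => simp [τ]
        | cast j => simp [τ, Function.update_of_ne j.2.ne]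
      · simp [τ]
    have hχ : ∀ h : ℕ → M, χ.Realize (Sum.elim (fun j : Fin n => h j) d) ↔
        ∃ y : Fin 1 → M, ∀ x : s, (ψ x).Realize
          (Sum.elim (fun j : Fin (n + 1) => Function.update h n (y 0) j) d) := by
      intro h
      simp only [χ, Formula.realize_iExs, Formula.realize_relabel, hτ, Formula.realize_iInf]
    have hev : ∀ᶠ i in W, χ.Realize (Sum.elim (fun j : Fin n => F i j) d) := by
      have hall : ∀ᶠ i in W, ∀ x : s,
          (ψ x).Realize (Sum.elim (fun j : Fin (n + 1) => F i j) d) :=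
        Filter.eventually_all.2 hψ
      filter_upwards [hall] with i hi
      refine (hχ (F i)).2 ⟨fun _ => F i n, ?_⟩
      simpa using hi
    obtain ⟨y, hy⟩ := (hχ g).1 ((hg χ).2 hev)
    refine ⟨y, fun _ => Set.mem_univ _, fun x hxs => ?_⟩
    have := (hρ (ψ ⟨x, hxs⟩) y).2 (hy ⟨x, hxs⟩)
    have hx' : x = _ := hx ⟨x, hxs⟩
    rw [hx']
    exact this
  obtain ⟨f, hf⟩ := hmon (Fin 1) p
    ((Cardinal.lt_aleph0_of_finite _).trans_le (Cardinal.aleph0_le_mk M)) hcard hsat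
  have key : ∀ ψ : L.Formula (Fin (n + 1) ⊕ Fin k),
      (∀ᶠ i in W, ψ.Realize (Sum.elim (fun j : Fin (n + 1) => F i j) d)) →
      ψ.Realize (Sum.elim (fun j : Fin (n + 1) => Function.update g n (f 0) j) d) :=
    fun ψ hψ => (hρ ψ f).1 (hf _ ⟨ψ, hψ, rfl⟩)
  refine ⟨f 0, fun ψ => ⟨fun h => ?_, key ψ⟩⟩
  by_contra hn
  have h1 := key ψ.not (by simpa only [Formula.realize_not] using Ultrafilter.eventually_not.2 hn)
  exact (Formula.realize_not.1 h1) h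

/-- In a monster model, `W`-limits of types of `ℕ`-tuples over finite parameter tuples are
realized. No saturation for infinitely many variables is needed, so countable models are
allowed. -/
theorem exists_limit_nat {L : FirstOrder.Language} [L.Structure M]
    (hmon : IsMonster L M) {I : Type} (W : Ultrafilter I) (F : I → ℕ → M) {k : ℕ}
    (d : Fin k → M) :
    ∃ g : ℕ → M, ∀ ψ : L.Formula (ℕ ⊕ Fin k),
      ψ.Realize (Sum.elim g d) ↔ ∀ᶠ i in W, ψ.Realize (Sum.elim (F i) d) := by
  classical
  suffices H : ∃ g : ℕ → M, ∀ n, LimitUpTo L W F d n g by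
    obtain ⟨g, hg⟩ := H
    refine ⟨g, fun ψ => ?_⟩
    obtain ⟨n, χ, hχ⟩ := exists_formula_fin (M := M) L ψ
    rw [← hχ g d, hg n χ]
    simp only [hχ]
  cases finite_or_infinite M with
  | inl hfin =>
    -- in a finite model every coordinate of `F` is eventually constant
    have hx : ∀ j : ℕ, ∃ x : M, ∀ᶠ i in W, F i j = x := by
      intro j
      obtain ⟨x, hx⟩ := Ultrafilter.eq_pure_of_finite (W.map fun i => F i j)
      refine ⟨x, ?_⟩
      have : ({x} : Set M) ∈ W.map fun i => F i j := by rw [hx]; exact Set.mem_singleton x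
      exact this
    choose g hg using hx
    refine ⟨g, fun n ψ => ?_⟩
    have hev : ∀ᶠ i in W, (fun j : Fin n => F i j) = fun j : Fin n => g j := by
      filter_upwards [Filter.eventually_all.2 fun j : Fin n => hg j] with i hi
      exact funext hi
    constructor
    · intro h
      filter_upwards [hev] with i hi
      rwa [hi]
    · intro h
      obtain ⟨i, hi, hi'⟩ := (hev.and h).exists
      rwa [hi] at hi'
  | inr hinf =>
    have h0 : ∀ g, LimitUpTo L W F d 0 g := by
      intro g ψ
      have : ∀ i, (fun j : Fin 0 => F i j) = fun j : Fin 0 => g j :=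
        fun i => funext fun j => j.elim0
      simp [this]
    let S : ∀ n, {g : ℕ → M // LimitUpTo L W F d n g} := fun n =>
      Nat.rec ⟨fun _ => Classical.arbitrary M, h0 _⟩
        (fun n g => ⟨Function.update g.1 n (g.2.step hmon).choose, (g.2.step hmon).choose_spec⟩) n
    have hS : ∀ n j, j < n → (S (n + 1)).1 j = (S n).1 j := fun n j hj =>
      Function.update_of_ne hj.ne _ _
    refine ⟨fun j => (S (j + 1)).1 j, fun n => ?_⟩
    have hcoh : (fun j : Fin n => (S (j + 1)).1 j) = fun j : Fin n => (S n).1 j := by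
      funext j
      obtain ⟨j, hj⟩ := j
      induction n, hj using Nat.le_induction with
      | base => rfl
      | succ n hn ih => exact ih.trans (hS n j hn).symm
    intro ψ
    rw [hcoh]
    exact (S n).2 ψ

/-- In a monster model, ultralimits of types of countable tuples over finite parameter tuples are
realized. -/
theorem exists_limit {L : FirstOrder.Language} [L.Structure M] [Nonempty M]
    (hmon : IsMonster L M) {I γ : Type} [Countable γ] (W : Ultrafilter I) (F : I → γ → M)
    {k : ℕ} (d : Fin k → M) :
    ∃ g : γ → M, ∀ ψ : L.Formula (γ ⊕ Fin k),
      ψ.Realize (Sum.elim g d) ↔ ∀ᶠ i in W, ψ.Realize (Sum.elim (F i) d) := by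
  classical
  obtain ⟨s, hs⟩ := Countable.exists_injective_nat γ
  let F' : I → ℕ → M := fun i => Function.extend s (F i) fun _ => Classical.arbitrary M
  obtain ⟨g, hg⟩ := exists_limit_nat hmon W F' d
  refine ⟨g ∘ s, fun ψ => ?_⟩
  have h1 : ∀ h : ℕ → M, (ψ.relabel (Sum.map s id)).Realize (Sum.elim h d) ↔
      ψ.Realize (Sum.elim (h ∘ s) d) := by
    intro h
    rw [Formula.realize_relabel]
    simp [Sum.elim_comp_map]
  have h2 : ∀ i, F' i ∘ s = F i := fun i =>
    funext fun x => hs.extend_apply (F i) (fun _ => Classical.arbitrary M) x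
  rw [← h1, hg]
  simp only [h1, h2]

/-! ### An ultrafilter of increasing, order-indiscernible index tuples -/

/-- The `n`-fold tensor power of a nonprincipal ultrafilter on `ℕ`, as an ultrafilter of
`n`-tuples: `∀ᶠ t in tensorPow n, P t` means `∀ᶠ t₀, …, ∀ᶠ tₙ₋₁, P (t₀, …, tₙ₋₁)`. -/
noncomputable def tensorPow : (n : ℕ) → Ultrafilter (Fin n → ℕ)
  | 0 => pure Fin.elim0
  | n + 1 => (Filter.hyperfilter ℕ).bind fun i => (tensorPow n).map (Fin.cons i)

theorem eventually_tensorPow_succ {n : ℕ} {P : (Fin (n + 1) → ℕ) → Prop} :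
    (∀ᶠ t in tensorPow (n + 1), P t) ↔
      ∀ᶠ i in Filter.hyperfilter ℕ, ∀ᶠ t in tensorPow n, P (Fin.cons i t) :=
  Iff.rfl

theorem tensorPow_lt (n i : ℕ) : ∀ᶠ t : Fin n → ℕ in tensorPow n, ∀ j, i < t j := by
  induction n with
  | zero => exact Filter.Eventually.of_forall fun t j => j.elim0
  | succ n ih =>
    rw [eventually_tensorPow_succ]
    have hi : ∀ᶠ m in Filter.hyperfilter ℕ, i < m :=
      Nat.hyperfilter_le_atTop (Filter.eventually_gt_atTop i)
    filter_upwards [hi] with m hm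
    filter_upwards [ih] with t ht
    intro j
    induction j using Fin.cases with
    | zero => simpa using hm
    | succ j => simpa using ht j

theorem tensorPow_strictMono (n : ℕ) : ∀ᶠ t : Fin n → ℕ in tensorPow n, StrictMono t := by
  induction n with
  | zero => exact Filter.Eventually.of_forall fun t j => j.elim0
  | succ n ih =>
    rw [eventually_tensorPow_succ]
    refine Filter.Eventually.of_forall fun m => ?_
    filter_upwards [ih, tensorPow_lt n m] with t ht hm
    intro i j hij
    induction j using Fin.cases with
    | zero => exact absurd hij (Fin.not_lt_zero _)
    | succ j =>
      induction i using Fin.cases with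
      | zero => simpa using hm j
      | succ i => simpa using ht (Fin.succ_lt_succ_iff.1 hij)

/-- Increasing subtuples of a generic tuple are generic. -/
theorem tensorPow_comp {m n : ℕ} (σ : Fin m → Fin n) (hσ : StrictMono σ)
    (P : (Fin m → ℕ) → Prop) :
    (∀ᶠ t in tensorPow n, P (t ∘ σ)) ↔ ∀ᶠ t in tensorPow m, P t := by
  induction n generalizing m with
  | zero =>
    cases m with
    | zero =>
      have : ∀ t : Fin 0 → ℕ, t ∘ σ = t := fun t => funext fun j => j.elim0
      simp only [this]
    | succ m => exact (σ 0).elim0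
  | succ n ih =>
    rw [eventually_tensorPow_succ]
    -- if `σ` omits the first coordinate, then that coordinate is irrelevant
    have hshift : ∀ (l : ℕ) (σ' : Fin l → Fin (n + 1)) (Q : (Fin l → ℕ) → Prop),
        StrictMono σ' → (∀ j, σ' j ≠ 0) → ∀ i : ℕ,
          ((∀ᶠ t in tensorPow n, Q ((Fin.cons i t : Fin (n + 1) → ℕ) ∘ σ')) ↔
            ∀ᶠ t in tensorPow l, Q t) := by
      intro l σ' Q hmono hne i
      have hs : ∀ j, ((σ' j).pred (hne j)).succ = σ' j := fun j => Fin.succ_pred _ _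
      rw [← ih (fun j => (σ' j).pred (hne j))
        (fun a b hab => Fin.pred_lt_pred_iff.2 (hmono hab)) Q]
      have : ∀ t : Fin n → ℕ, (Fin.cons i t : Fin (n + 1) → ℕ) ∘ σ' =
          t ∘ fun j => (σ' j).pred (hne j) := by
        intro t
        funext j
        rw [Function.comp_apply, ← hs j, Fin.cons_succ, Function.comp_apply]
      simp only [this]
    by_cases h : ∀ j, σ j ≠ 0
    · simp only [hshift m σ P hσ h, Filter.eventually_const]
    · push Not at h
      obtain ⟨j, hj⟩ := h
      cases m with
      | zero => exact j.elim0
      | succ m =>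
        have h0 : σ 0 = 0 := le_antisymm (hj ▸ hσ.monotone (Fin.zero_le j)) (Fin.zero_le _)
        rw [eventually_tensorPow_succ]
        have hne : ∀ j : Fin m, (σ ∘ Fin.succ) j ≠ 0 := fun j =>
          ((Fin.zero_le (σ 0)).trans_lt (hσ (Fin.succ_pos j))).ne'
        refine Filter.eventually_congr (Filter.Eventually.of_forall fun i => ?_)
        rw [← hshift m (σ ∘ Fin.succ) (fun t => P (Fin.cons i t))
          (hσ.comp (Fin.strictMono_succ)) hne i]
        have : ∀ t : Fin n → ℕ, (Fin.cons i t : Fin (n + 1) → ℕ) ∘ σ =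
            Fin.cons i ((Fin.cons i t : Fin (n + 1) → ℕ) ∘ σ ∘ Fin.succ) := by
          intro t
          funext j
          induction j using Fin.cases with
          | zero => simp [h0]
          | succ j => simp
        simp only [this]

/-- There is an ultrafilter on functions `t : ℚ → ℕ` for which all increasing finite subtuples
of `t` are generic for the tensor powers. -/
theorem exists_ultrafilter_rat : ∃ W : Ultrafilter (ℚ → ℕ),
    ∀ (n : ℕ) (f : Fin n → ℚ), StrictMono f → ∀ P : (Fin n → ℕ) → Prop,
      ((∀ᶠ t in W, P (t ∘ f)) ↔ ∀ᶠ t in tensorPow n, P t) := by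
  classical
  -- the position of `q` relative to the finite set `S`
  let pos : (S : Finset ℚ) → ℚ → Fin (S.card + 1) := fun S q =>
    ⟨(S.filter (· < q)).card, Nat.lt_succ_of_le (Finset.card_filter_le _ _)⟩
  have hpos : ∀ (S : Finset ℚ) (q r : ℚ), q ∈ S → q < r → pos S q < pos S r := by
    intro S q r hq hqr
    refine Fin.mk_lt_mk.2 (Finset.card_lt_card ?_)
    refine Finset.ssubset_iff_subset_ne.2 ⟨fun x hx => ?_, fun heq => ?_⟩
    · rw [Finset.mem_filter] at hx ⊢
      exact ⟨hx.1, hx.2.trans hqr⟩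
    · have : q ∈ S.filter (· < q) := heq ▸ Finset.mem_filter.2 ⟨hq, hqr⟩
      exact lt_irrefl q (Finset.mem_filter.1 this).2
  refine ⟨(Ultrafilter.of (Filter.atTop : Filter (Finset ℚ))).bind fun S =>
    (tensorPow (S.card + 1)).map fun t q => t (pos S q), fun n f hf P => ?_⟩
  change (∀ᶠ S in Ultrafilter.of (Filter.atTop : Filter (Finset ℚ)),
    ∀ᶠ t in tensorPow (S.card + 1), P (t ∘ (pos S ∘ f))) ↔ _
  have hS : ∀ᶠ S in Ultrafilter.of (Filter.atTop : Filter (Finset ℚ)),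
      Finset.univ.image f ⊆ S :=
    Ultrafilter.of_le _ (Filter.eventually_ge_atTop _)
  refine Iff.trans (Filter.eventually_congr (q := fun _ => ∀ᶠ t in tensorPow n, P t) ?_)
    Filter.eventually_const
  filter_upwards [hS] with S hS
  exact tensorPow_comp _ (fun i j hij => hpos S _ _
    (hS (Finset.mem_image_of_mem f (Finset.mem_univ i))) (hf hij)) P

/-! ### From unbounded alternation to a failure of strong `1`-distality -/

/-- Unbounded alternation of `P` yields, for each `K`, a block of `K` pairs with `P` true at the
`true` member and false at the `false` member, successive pairs being increasing. The values of
`w K ε i` with `K ≤ i` are irrelevant. -/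
theorem exists_pairs {ι : Type} [LinearOrder ι] (P : ι → Prop)
    (hP : ∀ N : ℕ, ∃ f : Fin (N + 1) → ι, StrictMono f ∧
      ∀ j : Fin N, ¬ (P (f j.castSucc) ↔ P (f j.succ))) :
    ∃ w : ℕ → Bool → ℕ → ι, ∀ K : ℕ,
      (∀ i < K, P (w K true i) ∧ ¬ P (w K false i)) ∧
        ∀ (i j : ℕ) (ε ε' : Bool), i < j → j < K → w K ε i < w K ε' j := by
  have hK : ∀ K : ℕ, ∃ v : Bool → ℕ → ι, (∀ i < K, P (v true i) ∧ ¬ P (v false i)) ∧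
      ∀ (i j : ℕ) (ε ε' : Bool), i < j → j < K → v ε i < v ε' j := by
    intro K
    obtain ⟨f, hf, halt⟩ := hP (2 * K)
    have hi : ∀ i : ℕ, ∃ u : Bool → ι, i < K → (P (u true) ∧ ¬ P (u false)) ∧
        ∀ ε, ∃ l : Fin (2 * K + 1), u ε = f l ∧ 2 * i ≤ l ∧ (l : ℕ) ≤ 2 * i + 1 := by
      intro i
      by_cases hiK : i < K
      · have h := halt ⟨2 * i, by omega⟩
        by_cases hp : P (f (Fin.castSucc ⟨2 * i, by omega⟩))
        · refine ⟨fun ε => cond ε (f (Fin.castSucc ⟨2 * i, by omega⟩))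
            (f (Fin.succ ⟨2 * i, by omega⟩)), fun _ => ⟨⟨hp, fun hq => h (iff_of_true hp hq)⟩, ?_⟩⟩
          rintro (_ | _)
          · exact ⟨_, rfl, by simp, by simp⟩
          · exact ⟨_, rfl, by simp, by simp⟩
        · refine ⟨fun ε => cond ε (f (Fin.succ ⟨2 * i, by omega⟩))
            (f (Fin.castSucc ⟨2 * i, by omega⟩)),
            fun _ => ⟨⟨by_contra fun hq => h (iff_of_false hp hq), hp⟩, ?_⟩⟩
          rintro (_ | _)
          · exact ⟨_, rfl, by simp, by simp⟩
          · exact ⟨_, rfl, by simp, by simp⟩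
      · exact ⟨fun _ => f 0, fun h => absurd h hiK⟩
    choose u hu using hi
    refine ⟨fun ε i => u i ε, fun i hiK => (hu i hiK).1, fun i j ε ε' hij hjK => ?_⟩
    obtain ⟨l, hl, -, hl2⟩ := (hu i (hij.trans hjK)).2 ε
    obtain ⟨l', hl', hl1', -⟩ := (hu j hjK).2 ε'
    change u i ε < u j ε'
    rw [hl, hl']
    exact hf (Fin.lt_def.2 (by omega))
  choose w hw using hK
  exact ⟨w, hw⟩

/-- If `φ(x, d)` alternates unboundedly on an indiscernible sequence of countable tuples, then
strong `1`-distality fails: for a suitable sequence indexed by `ℚ`, removing the element at `0`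
leaves a sequence indiscernible over `d`, but that element has a different `φ`-type over `d`. -/
theorem not_alternating {L : FirstOrder.Language} [L.Structure M]
    (hmon : IsMonster L M) (h : StronglyOneDistal L M) {β ι : Type} [Countable β]
    [LinearOrder ι] (b : ι → β → M) (hb : indiscOver L ∅ b) {k : ℕ}
    (φ : L.Formula (β ⊕ Fin k)) (d : Fin k → M)
    (halt : ∀ N : ℕ, ∃ f : Fin (N + 1) → ι, StrictMono f ∧ ∀ j : Fin N,
      ¬ (φ.Realize (Sum.elim (b (f j.castSucc)) d) ↔ φ.Realize (Sum.elim (b (f j.succ)) d))) :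
    False := by
  classical
  have hne : Nonempty M := by
    by_contra hM
    obtain ⟨f, -, hf⟩ := halt 1
    refine hf 0 (iff_of_eq ?_)
    congr 2
    exact funext fun x => (hM ⟨b (f 0) x⟩).elim
  obtain ⟨w, hw⟩ := exists_pairs (fun i => φ.Realize (Sum.elim (b i) d)) halt
  obtain ⟨W, hW⟩ := exists_ultrafilter_rat
  have hlarge : ∀ m : ℕ, ∀ᶠ K in Filter.hyperfilter ℕ, m < K := fun m =>
    Nat.hyperfilter_le_atTop (Filter.eventually_gt_atTop m)
  -- the element at `0` comes from the points where `φ` fails, all others from where it holds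
  obtain ⟨g, hg⟩ := exists_limit hmon
    (W.bind fun t => (Filter.hyperfilter ℕ).map fun K => (t, K))
    (fun (x : (ℚ → ℕ) × ℕ) (y : ℚ × β) => b (w x.2 (decide (y.1 ≠ 0)) (x.1 y.1)) y.2) d
  have hg' : ∀ ψ : L.Formula ((ℚ × β) ⊕ Fin k), ψ.Realize (Sum.elim g d) ↔
      ∀ᶠ t : ℚ → ℕ in W, ∀ᶠ K in Filter.hyperfilter ℕ, ψ.Realize
        (Sum.elim (fun y : ℚ × β => b (w K (decide (y.1 ≠ 0)) (t y.1)) y.2) d) := hg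
  -- truth of formulas with parameters from `d` at finite subtuples of the new sequence
  have hfin : ∀ (N : ℕ) (f : Fin N → ℚ) (k' : ℕ) (a : Fin k' → M), (∀ j, a j ∈ Set.range d) →
      ∀ ψ : L.Formula ((Fin N × β) ⊕ Fin k'),
      (ψ.Realize (Sum.elim (tupcat fun j => fun x => g (f j, x)) a) ↔
        ∀ᶠ t : ℚ → ℕ in W, ∀ᶠ K in Filter.hyperfilter ℕ, ψ.Realize
          (Sum.elim (tupcat fun j => b (w K (decide (f j ≠ 0)) (t (f j)))) a)) := by
    intro N f k' a ha ψ
    choose σ hσ using ha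
    have hrel : ∀ G : ℚ × β → M, (ψ.relabel (Sum.map (Prod.map f id) σ)).Realize (Sum.elim G d) ↔
        ψ.Realize (Sum.elim (tupcat fun j => fun x => G (f j, x)) a) := by
      intro G
      rw [Formula.realize_relabel, Sum.elim_comp_map]
      have h1 : d ∘ σ = a := funext hσ
      rw [h1]
      exact Iff.rfl
    rw [← hrel, hg']
    simp only [hrel]
  let c : {q : ℚ // q ≠ 0} → β → M := fun q x => g (q, x)
  let a : β → M := fun x => g (0, x)
  let C : Set {q : ℚ // q ≠ 0} := {q | q.1 < 0}
  have hcut : IsDedekindCut C := by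
    refine ⟨⟨⟨-1, by norm_num⟩, ?_⟩, ⟨⟨1, by norm_num⟩, ?_⟩, fun i hi j hj => ?_, fun i hi => ?_,
      fun i hi => ?_⟩
    · change (-1 : ℚ) < 0
      norm_num
    · change ¬ (1 : ℚ) < 0
      norm_num
    · exact lt_of_le_of_lt (Subtype.coe_le_coe.2 hj) hi
    · have hi' : i.1 < 0 := hi
      refine ⟨⟨i.1 / 2, by linarith⟩, ?_, ?_⟩
      · change i.1 / 2 < 0
        linarith
      · change i.1 < i.1 / 2
        linarith
    · have hi' : 0 < i.1 := lt_of_le_of_ne (not_lt.1 hi) (Ne.symm i.2)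
      have hpos : 0 < i.1 / 2 := by linarith
      refine ⟨⟨i.1 / 2, hpos.ne'⟩, not_lt.2 hpos.le, ?_⟩
      change i.1 / 2 < i.1
      linarith
  have hind : indiscOver L (Set.range d) c := by
    -- away from `0`, truth at a subtuple is decided by the tensor power alone
    have hone : ∀ (N : ℕ) (f : Fin N → {q : ℚ // q ≠ 0}), StrictMono f →
        ∀ (k' : ℕ) (e : Fin k' → M), (∀ i, e i ∈ Set.range d) →
        ∀ ψ : L.Formula ((Fin N × β) ⊕ Fin k'),
        (ψ.Realize (Sum.elim (tupcat fun j => c (f j)) e) ↔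
          ∀ᶠ s : Fin N → ℕ in tensorPow N, ∀ᶠ K in Filter.hyperfilter ℕ,
            ψ.Realize (Sum.elim (tupcat fun j => b (w K true (s j))) e)) := by
      intro N f hf k' e he ψ
      rw [← hW N (fun j => (f j).1) (fun i j hij => hf hij)]
      refine (hfin N (fun j => (f j).1) k' e he ψ).trans ?_
      simp only [ne_eq, (f _).2, not_false_eq_true, decide_true, Function.comp_apply]
    intro N f f' hf hf' k' e he ψ
    rw [hone N f hf k' e he ψ, hone N f' hf' k' e he ψ]
  have hins : InsertsInd L ∅ c (fun _ : PUnit => C) (fun _ => a) Set.univ := by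
    let r : {q : ℚ // q ≠ 0} ⊕ PUnit → ℚ := Sum.elim (fun q => q.1) fun _ => 0
    have hr : ∀ x y, insLT (fun _ : PUnit => C) x y → r x < r y := by
      rintro (x | x) (y | y) hxy
      · exact hxy
      · exact hxy
      · exact lt_of_le_of_ne (not_lt.1 hxy) (Ne.symm y.2)
      · rcases hxy with hxy | hxy
        · exact absurd hxy (ssubset_irrefl C)
        · exact absurd hxy.2 (lt_irrefl _)
    have hrg : ∀ x, Sum.elim c (fun _ => a) x = fun y => g (r x, y) := by
      rintro (x | x) <;> rfl
    intro N f f' hf hf' _ _ k' e he ψ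
    have hed : ∀ j, e j ∈ Set.range d := fun j => absurd (he j) (Set.notMem_empty _)
    simp only [hrg]
    rw [hfin N (fun j => r (f j)) k' e hed, hfin N (fun j => r (f' j)) k' e hed]
    -- generically, both finite tuples are increasing subtuples of `b`
    have hgen : ∀ F : Fin N → {q : ℚ // q ≠ 0} ⊕ PUnit,
        (∀ x y : Fin N, x < y → insLT (fun _ : PUnit => C) (F x) (F y)) →
        ∀ᶠ t : ℚ → ℕ in W, ∀ᶠ K in Filter.hyperfilter ℕ,
          StrictMono fun j => w K (decide (r (F j) ≠ 0)) (t (r (F j))) := by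
      intro F hF
      have hs := (hW N (fun j => r (F j)) (fun i j hij => hr _ _ (hF i j hij)) StrictMono).2
        (tensorPow_strictMono N)
      filter_upwards [hs] with t ht
      filter_upwards [Filter.eventually_all.2 fun j => hlarge (t (r (F j)))] with K hK
      exact fun i j hij => (hw K).2 _ _ _ _ (ht hij) (hK j)
    refine Filter.eventually_congr ?_
    filter_upwards [hgen f hf, hgen f' hf'] with t ht ht'
    refine Filter.eventually_congr ?_
    filter_upwards [ht, ht'] with K hK hK'
    exact hb N _ _ hK hK' k' e he ψ
  have hconc := h _ β c C hcut (Set.range d) a hind hins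
  have hiff := hconc 1 (fun _ => Sum.inl ⟨1, one_ne_zero⟩) (fun _ => Sum.inr PUnit.unit)
    (fun x y hxy => absurd hxy (by omega)) (fun x y hxy => absurd hxy (by omega))
    (fun _ _ _ => Set.mem_univ _) (fun _ _ _ => Set.mem_univ _) k d (fun i => ⟨i, rfl⟩)
    (φ.relabel (Sum.map (fun x => (0, x)) id))
  have hrel : ∀ B : Fin 1 → β → M, (φ.relabel (Sum.map (fun x => ((0 : Fin 1), x)) id)).Realize
      (Sum.elim (tupcat B) d) ↔ φ.Realize (Sum.elim (B 0) d) := by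
    intro B
    rw [Formula.realize_relabel, Sum.elim_comp_map]
    exact Iff.rfl
  have hval : ∀ q : ℚ, (φ.Realize (Sum.elim (fun x => g (q, x)) d) ↔
      ∀ᶠ t : ℚ → ℕ in W, ∀ᶠ K in Filter.hyperfilter ℕ,
        φ.Realize (Sum.elim (b (w K (decide (q ≠ 0)) (t q))) d)) := by
    intro q
    have := hfin 1 (fun _ => q) k d (fun i => ⟨i, rfl⟩) (φ.relabel (Sum.map (fun x => (0, x)) id))
    simpa only [hrel] using this
  have htrue : φ.Realize (Sum.elim (fun x => g (1, x)) d) := by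
    rw [hval]
    refine Filter.Eventually.of_forall fun t => ?_
    filter_upwards [hlarge (t 1)] with K hK
    simpa using ((hw K).1 _ hK).1
  have hfalse : ¬ φ.Realize (Sum.elim (fun x => g (0, x)) d) := by
    rw [hval, ← Ultrafilter.eventually_not]
    refine Filter.Eventually.of_forall fun t => ?_
    rw [← Ultrafilter.eventually_not]
    filter_upwards [hlarge (t 0)] with K hK
    simpa using ((hw K).1 _ hK).2
  rw [hrel, hrel] at hiff
  exact hfalse (hiff.1 htrue)

/-- a strongly `1`-distal theory is NIP. -/
theorem stmt19 (L : FirstOrder.Language) (M : Type) [L.Structure M]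
    (hmon : IsMonster L M) (h : StronglyOneDistal L M) : IsNIP L M := by
  classical
  intro β ι _ b hb k φ d
  by_contra hcon
  push Not at hcon
  -- restrict to the finite set `V` of variables of `φ`
  let V := {x : β // Sum.inl x ∈ BoundedFormula.freeVarFinset φ}
  have : Finite V := Set.Finite.to_subtype
    ((Finset.finite_toSet (BoundedFormula.freeVarFinset φ)).preimage
      (Sum.inl_injective.injOn (s := Sum.inl ⁻¹' _)))
  let r : BoundedFormula.freeVarFinset φ → V ⊕ Fin k := fun x =>
    match x with
    | ⟨Sum.inl m, hm⟩ => Sum.inl ⟨m, hm⟩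
    | ⟨Sum.inr j, _⟩ => Sum.inr j
  let φ' : L.Formula (V ⊕ Fin k) := BoundedFormula.restrictFreeVar φ r
  have hφ : ∀ B : β → M, φ'.Realize (Sum.elim (fun x : V => B x) d) ↔
      φ.Realize (Sum.elim B d) := by
    intro B
    refine BoundedFormula.realize_restrictFreeVar (Sum.elim B d) ?_
    rintro ⟨m | j, hm⟩ <;> rfl
  refine not_alternating hmon h (fun i (x : V) => b i x) ?_ φ' d fun N => ?_
  · intro N f f' hf hf' k' e he ψ
    have hrel : ∀ B : Fin N → β → M,
        (ψ.relabel (Sum.map (Prod.map id Subtype.val) id)).Realize (Sum.elim (tupcat B) e) ↔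
          ψ.Realize (Sum.elim (tupcat fun j => fun x : V => B j x) e) := by
      intro B
      rw [Formula.realize_relabel, Sum.elim_comp_map]
      exact Iff.rfl
    rw [← hrel fun j => b (f j), ← hrel fun j => b (f' j)]
    exact hb N f f' hf hf' k' e he _
  · obtain ⟨f, hf, hfN⟩ := hcon N
    refine ⟨f, hf, fun j hj => ?_⟩
    rw [hφ, hφ] at hj
    grind

end DR
end
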